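/- arXiv:0806.2518 — 4 statements merged into one kernel-verified Lean document; each statement's English description precedes it below -/
import Mathlib

section
/- Let g : ℝ → ℝ be a measurable function and let 0 < c ≤ C be constants with c ≤ g(y) ≤ C for all y ∈ ℝ. Assume that (1/x)∫₀ˣ g(y) dy → m as x → +∞ and as x → −∞ (where ∫₀ˣ := −∫ₓ⁰ for x < 0). Then for every N > 0, sup_{|x| ≤ N} |∫₀ˣ g(z/ε) dz − m·x| → 0 as ε → 0⁺. -/
/-! At scale `ε` the primitive of `g (· / ε)` is the blow-down `ε • G (ε⁻¹ • x)` of the primitive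
`G` of `g`. Convergence of the averages says that `G` differs from the linear map `x ↦ x • m` by a
sublinear error; as `G` is continuous, this error is at most `η * ‖y‖ + K` for *all* `y`, with `η`
arbitrarily small. Blowing down turns this bound into `η * ‖x‖ + ‖ε‖ * K`, which is uniformly small
on bounded sets. -/

open MeasureTheory Filter intervalIntegral

section BlowDown

open Asymptotics Bornology Topology

variable {𝕜 V E : Type*} [NormedField 𝕜] [SeminormedAddCommGroup V] [SeminormedAddCommGroup E]

lemma exists_forall_norm_le_mul_norm_add_of_isLittleO {f : V → E}
    (hf : f =o[cobounded V] id) (hbdd : ∀ s, IsBounded s → IsBounded (f '' s))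
    {η : ℝ} (hη : 0 < η) : ∃ K > 0, ∀ y, ‖f y‖ ≤ η * ‖y‖ + K := by
  have hexc : IsBounded {y | ‖f y‖ ≤ η * ‖y‖}ᶜ := isBounded_compl_iff.2 (hf.bound hη)
  obtain ⟨K, hK, hfK⟩ := (hbdd _ hexc).exists_pos_norm_le
  refine ⟨K, hK, fun y ↦ ?_⟩
  by_cases hy : ‖f y‖ ≤ η * ‖y‖
  · exact hy.trans (le_add_of_nonneg_right hK.le)
  · exact (hfK _ (Set.mem_image_of_mem f hy)).trans (le_add_of_nonneg_left (by positivity))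

lemma tendstoUniformlyOn_smul_comp_inv_smul [NormedSpace 𝕜 V] [NormedSpace 𝕜 E]
    {f : V → E} {L : V →ₗ[𝕜] E} (hf : (fun y ↦ f y - L y) =o[cobounded V] id)
    (hbdd : ∀ s, IsBounded s → IsBounded ((fun y ↦ f y - L y) '' s))
    {s : Set V} (hs : IsBounded s) :
    TendstoUniformlyOn (fun (ε : 𝕜) x ↦ ε • f (ε⁻¹ • x)) L (𝓝[≠] 0) s := by
  rw [Metric.tendstoUniformlyOn_iff]
  intro δ hδ
  obtain ⟨N, hN, hsN⟩ := hs.exists_pos_norm_le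
  obtain ⟨K, hK, hfK⟩ := exists_forall_norm_le_mul_norm_add_of_isLittleO hf hbdd
    (show 0 < δ / (2 * N) by positivity)
  have hsmall : ∀ᶠ ε : 𝕜 in 𝓝[≠] 0, ‖ε‖ < δ / (2 * K) :=
    (tendsto_norm_zero.mono_left nhdsWithin_le_nhds).eventually_lt_const (by positivity)
  filter_upwards [hsmall, self_mem_nhdsWithin] with ε hεK (hε : ε ≠ 0) x hx
  calc dist (L x) (ε • f (ε⁻¹ • x))
    _ = ‖ε‖ * ‖f (ε⁻¹ • x) - L (ε⁻¹ • x)‖ := by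
      rw [dist_comm, dist_eq_norm, ← norm_smul, smul_sub, map_smul, smul_inv_smul₀ hε]
    _ ≤ ‖ε‖ * (δ / (2 * N) * ‖ε⁻¹ • x‖ + K) := by gcongr; exact hfK _
    _ = δ / (2 * N) * ‖x‖ + ‖ε‖ * K := by
      have : ‖ε‖ ≠ 0 := norm_ne_zero_iff.2 hε
      rw [norm_smul, norm_inv]
      field_simp
    _ < δ / (2 * N) * N + δ / (2 * K) * K :=
      add_lt_add_of_le_of_lt (by gcongr; exact hsN x hx) (by gcongr)
    _ = δ := by field_simp; norm_num

lemma isLittleO_sub_smul_of_tendsto_inv_smul [NormedSpace 𝕜 E] {f : 𝕜 → E} {m : E}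
    (hf : Tendsto (fun x ↦ x⁻¹ • f x) (cobounded 𝕜) (𝓝 m)) :
    (fun x ↦ f x - x • m) =o[cobounded 𝕜] id := by
  have hdiff : (fun x ↦ x⁻¹ • f x - m) =o[cobounded 𝕜] (fun _ ↦ (1 : 𝕜)) :=
    (isLittleO_one_iff 𝕜).2 (tendsto_sub_nhds_zero_iff.2 hf)
  refine ((isBigO_refl id _).smul_isLittleO hdiff).congr' ?_ (.of_forall fun x ↦ mul_one x)
  filter_upwards [eventually_ne_cobounded 0] with x hx
  rw [id, smul_sub, smul_inv_smul₀ hx]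

lemma isBounded_image_of_continuous {X Y : Type*} [PseudoMetricSpace X] [ProperSpace X]
    [PseudoMetricSpace Y] {f : X → Y} (hf : Continuous f) {s : Set X} (hs : IsBounded s) :
    IsBounded (f '' s) :=
  (hs.isCompact_closure.image hf).isBounded.subset (Set.image_mono subset_closure)

end BlowDown

lemma locallyIntegrable_of_forall_norm_le {X E : Type*} [TopologicalSpace X] [MeasurableSpace X]
    [NormedAddCommGroup E] {μ : Measure X} [IsLocallyFiniteMeasure μ] {f : X → E}
    (hf : AEStronglyMeasurable f μ) {C : ℝ} (hC : ∀ x, ‖f x‖ ≤ C) : LocallyIntegrable f μ :=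
  (locallyIntegrable_const C).mono hf (.of_forall fun x ↦ (hC x).trans (le_abs_self C))

theorem stmt0_general {E : Type*} [NormedAddCommGroup E] [NormedSpace ℝ E] [CompleteSpace E]
    {g : ℝ → E} (hg : LocallyIntegrable g) {m : E}
    (hm : Tendsto (fun x ↦ x⁻¹ • ∫ y in (0 : ℝ)..x, g y) (Bornology.cobounded ℝ) (nhds m))
    {s : Set ℝ} (hs : Bornology.IsBounded s) :
    TendstoUniformlyOn (fun ε x ↦ ∫ z in (0 : ℝ)..x, g (z / ε)) (fun x ↦ x • m)
      (nhdsWithin 0 {0}ᶜ) s := by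
  have hint (a b : ℝ) : IntervalIntegrable g volume a b :=
    (hg.integrableOn_isCompact isCompact_uIcc).intervalIntegrable
  have hcont : Continuous fun x ↦ (∫ y in (0 : ℝ)..x, g y) - x • m :=
    (continuous_primitive hint 0).sub (by fun_prop)
  refine (tendstoUniformlyOn_smul_comp_inv_smul (L := LinearMap.toSpanSingleton ℝ E m)
    (isLittleO_sub_smul_of_tendsto_inv_smul hm)
    (fun _ ↦ isBounded_image_of_continuous hcont) hs).congr ?_
  filter_upwards [self_mem_nhdsWithin] with ε (hε : ε ≠ 0) x _
  simp only [integral_comp_div _ hε, zero_div, smul_eq_mul, inv_mul_eq_div]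

/-- deterministic content of Lemma 3.4.
Let `g : ℝ → ℝ` be measurable with `0 < c ≤ g ≤ C`, and assume that the averages
`(1/x) ∫₀ˣ g(y) dy` converge to `m` as `x → +∞` and as `x → −∞`.  Then for every `N > 0`,
`sup_{|x| ≤ N} |∫₀ˣ g(z/ε) dz − m x| → 0` as `ε → 0⁺`, i.e. the functions
`x ↦ ∫₀ˣ g(z/ε) dz` converge to `x ↦ m x` uniformly on `{x : |x| ≤ N}`. -/
theorem stmt0 (g : ℝ → ℝ) (hg : Measurable g) (c C : ℝ) (hc : 0 < c) (hcC : c ≤ C)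
    (hlow : ∀ y, c ≤ g y) (hup : ∀ y, g y ≤ C) (m : ℝ)
    (htop : Tendsto (fun x => (1 / x) * ∫ y in (0:ℝ)..x, g y) atTop (nhds m))
    (hbot : Tendsto (fun x => (1 / x) * ∫ y in (0:ℝ)..x, g y) atBot (nhds m))
    (N : ℝ) (hN : 0 < N) :
    TendstoUniformlyOn (fun ε x => ∫ z in (0:ℝ)..x, g (z / ε)) (fun x => m * x)
      (nhdsWithin 0 (Set.Ioi 0)) {x : ℝ | |x| ≤ N} := by
  have hgC : ∀ y, ‖g y‖ ≤ C := fun y ↦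
    (Real.norm_of_nonneg (hc.le.trans (hlow y))).trans_le (hup y)
  have hlim := stmt0_general (locallyIntegrable_of_forall_norm_le hg.aestronglyMeasurable hgC)
    (by simpa only [IsOrderBornology.cobounded_eq, one_div, smul_eq_mul] using hbot.sup htop)
    (isBounded_iff_forall_norm_le.2 ⟨N, fun _ hx ↦ hx⟩ : Bornology.IsBounded {x : ℝ | |x| ≤ N})
  simpa only [smul_eq_mul, mul_comm m] using
    (hlim.tendstoUniformlyOnFilter.mono_left (nhdsGT_le_nhdsNE 0)).tendstoUniformlyOn
end

section
/- Let g : ℝ → ℝ be a bounded measurable function and m ∈ ℝ such that (1/x)∫₀ˣ g(z) dz → m as x → +∞ and as x → −∞ (where ∫₀ˣ := −∫ₓ⁰ for x < 0). Then for every continuous function f : ℝ → ℝ, every x ∈ ℝ and every N > 0, sup_{|y−x| ≤ N} |∫ₓʸ f(z) g(z/ε) dz − m ∫ₓʸ f(z) dz| → 0 as ε → 0⁺. -/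
open MeasureTheory Filter intervalIntegral

/-!
Bounded functions `k i` whose integrals over every interval converge also converge when tested
against an integrable weight: integrating by parts settles absolutely continuous weights, these
are dense in `L¹`, and the bound on the `k i` is uniform in `i`. The same bound makes the integrals
`∫ z in x..y, f z * k i z` equicontinuous in `y`, so the convergence is uniform on compact sets.
For the rescalings `g (z / ε)`, the integral over `0..y` equals `y` times the mean of `g` over
`0..y / ε`.
-/

open scoped Topology Interval ContDiff

theorem tendstoUniformlyOn_of_equicontinuousOn {ι X α : Type*} [TopologicalSpace X]
    [UniformSpace α] {F : ι → X → α} {F₀ : X → α} {l : Filter ι} {s : Set X} (hs : IsCompact s)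
    (hF : EquicontinuousOn F s) (hlim : ∀ x ∈ s, Tendsto (fun i => F i x) l (𝓝 (F₀ x))) :
    TendstoUniformlyOn F F₀ l s := by
  have hUniformOnFun : Tendsto (UniformOnFun.ofFun {s} ∘ F) l (𝓝 (UniformOnFun.ofFun {s} F₀)) := by
    refine (EquicontinuousOn.tendsto_uniformOnFun_iff_pi' ?_ ?_ l F₀).2 (tendsto_pi_nhds.2 ?_)
    · rintro _ rfl
      exact hs
    · rintro _ rfl
      exact hF
    · rintro ⟨x, hx⟩
      exact hlim x (by simpa only [Set.sUnion_singleton] using hx)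
  exact UniformOnFun.tendsto_iff_tendstoUniformlyOn.1 hUniformOnFun s rfl

section IntervalIntegral

variable {a b K : ℝ} {f k : ℝ → ℝ}

theorem intervalIntegrable_mul_of_ae_bound (hf : IntervalIntegrable f volume a b)
    (hk : AEStronglyMeasurable k) (hK : ∀ᵐ z, |k z| ≤ K) :
    IntervalIntegrable (fun z => f z * k z) volume a b := by
  rw [intervalIntegrable_iff] at hf ⊢
  exact hf.mul_bdd hk.restrict (ae_restrict_of_ae hK)

theorem intervalIntegrable_of_ae_bound (hk : AEStronglyMeasurable k) (hK : ∀ᵐ z, |k z| ≤ K) :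
    IntervalIntegrable k volume a b := by
  simpa only [one_mul] using
    intervalIntegrable_mul_of_ae_bound (intervalIntegrable_const (c := (1 : ℝ))) hk hK

theorem abs_intervalIntegral_mul_le (hf : IntervalIntegrable f volume a b)
    (hK : ∀ᵐ z, |k z| ≤ K) :
    |∫ z in a..b, f z * k z| ≤ K * |∫ z in a..b, ‖f z‖| := by
  obtain ⟨z₀, hz₀⟩ := hK.exists
  rw [← abs_of_nonneg ((abs_nonneg _).trans hz₀), ← abs_mul, ← intervalIntegral.integral_const_mul]
  refine norm_integral_le_abs_of_norm_le (E := ℝ) (ae_restrict_of_ae ?_) (hf.norm.const_mul K)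
  filter_upwards [hK] with z hz
  rw [norm_mul, mul_comm]
  gcongr
  exact hz

theorem integral_mul_eq_sub_integral_deriv_mul_integral {u v : ℝ → ℝ}
    (hu : AbsolutelyContinuousOnInterval u a b) (hv : IntervalIntegrable v volume a b) :
    ∫ z in a..b, u z * v z =
      u b * (∫ z in a..b, v z) - ∫ z in a..b, deriv u z * ∫ t in a..z, v t := by
  have hV := hv.absolutelyContinuousOnInterval_intervalIntegral Set.left_mem_uIcc
  have hderiv : ∫ z in a..b, u z * v z =
      ∫ z in a..b, u z * deriv (fun y => ∫ t in a..y, v t) z := by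
    refine integral_congr_ae ?_
    filter_upwards [hv.ae_hasDerivAt_integral] with z hz hzab
    rw [(hz (Set.uIoc_subset_uIcc hzab) a Set.left_mem_uIcc).deriv]
  rw [hderiv, hu.integral_mul_deriv_eq_deriv_mul hV, integral_same, mul_zero, sub_zero]

theorem exists_contDiff_abs_intervalIntegral_sub_le (hf : IntervalIntegrable f volume a b) {η : ℝ}
    (hη : 0 < η) : ∃ φ : ℝ → ℝ, ContDiff ℝ ∞ φ ∧ |∫ z in a..b, ‖f z - φ z‖| ≤ η := by
  rw [intervalIntegrable_iff, IntegrableOn, ← memLp_one_iff_integrable] at hf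
  obtain ⟨φ, hφsupp, hφ, hle⟩ := hf.exist_eLpNorm_sub_le ENNReal.one_ne_top le_rfl hη
  refine ⟨φ, hφ, ?_⟩
  have hsub : MemLp (f - φ) 1 (volume.restrict (Ι a b)) :=
    hf.sub (hφ.continuous.memLp_of_hasCompactSupport hφsupp)
  have hnorm : ∫ z in Ι a b, ‖f z - φ z‖ ≤ η := by
    refine (integral_norm_eq_lintegral_enorm hsub.aestronglyMeasurable).trans_le ?_
    rw [← eLpNorm_one_eq_lintegral_enorm]
    exact ENNReal.toReal_le_of_le_ofReal hη.le hle
  rwa [abs_integral_eq_abs_integral_uIoc, abs_of_nonneg (integral_nonneg fun _ => norm_nonneg _)]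

end IntervalIntegral

section WeakConvergence

variable {ι : Type*} {l : Filter ι} {k : ι → ℝ → ℝ} {k₀ : ℝ → ℝ} {K : ℝ} {f : ℝ → ℝ}

theorem equicontinuous_integral_mul (hk : ∀ i, AEStronglyMeasurable (k i))
    (hK : ∀ i, ∀ᵐ z, |k i z| ≤ K) (hf : ∀ a b, IntervalIntegrable f volume a b) (x : ℝ) :
    Equicontinuous fun i y => ∫ z in x..y, f z * k i z := by
  intro y₀
  have hmodulus : Tendsto (fun y => K * |∫ z in y₀..y, ‖f z‖|) (𝓝 y₀) (𝓝 0) := by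
    have hcont : Continuous fun y => K * |∫ z in y₀..y, ‖f z‖| :=
      (continuous_primitive (fun a b => (hf a b).norm) y₀).abs.const_mul K
    simpa only [integral_same, abs_zero, mul_zero] using hcont.tendsto y₀
  refine Metric.equicontinuousAt_of_continuity_modulus _ hmodulus _ (.of_forall fun y i => ?_)
  have hfk : ∀ a b, IntervalIntegrable (fun z => f z * k i z) volume a b := fun a b =>
    intervalIntegrable_mul_of_ae_bound (hf a b) (hk i) (hK i)
  rw [dist_comm, Real.dist_eq, integral_interval_sub_left (hfk x y) (hfk x y₀)]
  exact abs_intervalIntegral_mul_le (hf y₀ y) (hK i)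

variable [l.IsCountablyGenerated]

theorem tendsto_integral_absolutelyContinuous_mul
    (hk : ∀ i, AEStronglyMeasurable (k i)) (hK : ∀ i, ∀ᵐ z, |k i z| ≤ K) {a b : ℝ}
    (hk₀ : IntervalIntegrable k₀ volume a b)
    (hlim : ∀ c d, Tendsto (fun i => ∫ z in c..d, k i z) l (𝓝 (∫ z in c..d, k₀ z)))
    (hf : AbsolutelyContinuousOnInterval f a b) :
    Tendsto (fun i => ∫ z in a..b, f z * k i z) l (𝓝 (∫ z in a..b, f z * k₀ z)) := by
  have hf' : IntervalIntegrable (deriv f) volume a b := hf.intervalIntegrable_deriv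
  have hki : ∀ i c d, IntervalIntegrable (k i) volume c d := fun i _ _ =>
    intervalIntegrable_of_ae_bound (hk i) (hK i)
  simp only [integral_mul_eq_sub_integral_deriv_mul_integral hf (hki _ a b),
    integral_mul_eq_sub_integral_deriv_mul_integral hf hk₀]
  refine ((hlim a b).const_mul (f b)).sub ?_
  refine tendsto_integral_filter_of_dominated_convergence
    (fun z => ‖deriv f z‖ * (K * |z - a|)) (.of_forall fun i => ?_) (.of_forall fun i => ?_)
    (hf'.norm.mul_continuousOn (by fun_prop)) (.of_forall fun z _ => ?_)
  · exact (hf'.mul_continuousOn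
      (continuous_primitive (hki i) a).continuousOn).aestronglyMeasurable_restrict_uIoc
  · refine .of_forall fun z _ => ?_
    rw [norm_mul]
    gcongr
    exact norm_integral_le_of_norm_le_const_ae ((hK i).mono fun _ hz _ => hz)
  · exact (hlim a z).const_mul (deriv f z)

theorem tendsto_integral_mul
    (hk : ∀ i, AEStronglyMeasurable (k i)) (hK : ∀ i, ∀ᵐ z, |k i z| ≤ K)
    (hk₀ : AEStronglyMeasurable k₀) (hK₀ : ∀ᵐ z, |k₀ z| ≤ K)
    (hlim : ∀ c d, Tendsto (fun i => ∫ z in c..d, k i z) l (𝓝 (∫ z in c..d, k₀ z)))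
    {a b : ℝ} (hf : IntervalIntegrable f volume a b) :
    Tendsto (fun i => ∫ z in a..b, f z * k i z) l (𝓝 (∫ z in a..b, f z * k₀ z)) := by
  obtain ⟨z₀, hz₀⟩ := hK₀.exists
  have hK_nonneg : 0 ≤ K := (abs_nonneg _).trans hz₀
  refine Metric.tendsto_nhds.2 fun τ hτ => ?_
  obtain ⟨φ, hφ, hfφ⟩ :=
    exists_contDiff_abs_intervalIntegral_sub_le hf (η := τ / (3 * (K + 1))) (by positivity)
  have hφi : IntervalIntegrable φ volume a b := hφ.continuous.intervalIntegrable a b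
  have happrox : ∀ v : ℝ → ℝ, AEStronglyMeasurable v → (∀ᵐ z, |v z| ≤ K) →
      dist (∫ z in a..b, f z * v z) (∫ z in a..b, φ z * v z) < τ / 3 := by
    intro v hv hvK
    calc dist (∫ z in a..b, f z * v z) (∫ z in a..b, φ z * v z)
        = |∫ z in a..b, (f z - φ z) * v z| := by
          simp only [sub_mul]
          rw [integral_sub (intervalIntegrable_mul_of_ae_bound hf hv hvK)
            (intervalIntegrable_mul_of_ae_bound hφi hv hvK), Real.dist_eq]
      _ ≤ K * |∫ z in a..b, ‖f z - φ z‖| := abs_intervalIntegral_mul_le (hf.sub hφi) hvK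
      _ ≤ K * (τ / (3 * (K + 1))) := by gcongr
      _ = K / (K + 1) * (τ / 3) := by field_simp
      _ < τ / 3 := mul_lt_of_lt_one_left (by positivity) ((div_lt_one (by positivity)).2 (by simp))
  have hφac : AbsolutelyContinuousOnInterval φ a b :=
    (hφ.of_le (by simp)).contDiffOn.absolutelyContinuousOnInterval
  have hki₀ : IntervalIntegrable k₀ volume a b := intervalIntegrable_of_ae_bound hk₀ hK₀
  filter_upwards [Metric.tendsto_nhds.1
    (tendsto_integral_absolutelyContinuous_mul hk hK hki₀ hlim hφac) (τ / 3) (by positivity)]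
    with i hi
  have hi_approx := happrox (k i) (hk i) (hK i)
  have h₀_approx := happrox k₀ hk₀ hK₀
  rw [dist_comm] at h₀_approx
  linarith [dist_triangle4 (∫ z in a..b, f z * k i z) (∫ z in a..b, φ z * k i z)
    (∫ z in a..b, φ z * k₀ z) (∫ z in a..b, f z * k₀ z)]

theorem tendstoUniformlyOn_integral_mul
    (hk : ∀ i, AEStronglyMeasurable (k i)) (hK : ∀ i, ∀ᵐ z, |k i z| ≤ K)
    (hk₀ : AEStronglyMeasurable k₀) (hK₀ : ∀ᵐ z, |k₀ z| ≤ K)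
    (hlim : ∀ c d, Tendsto (fun i => ∫ z in c..d, k i z) l (𝓝 (∫ z in c..d, k₀ z)))
    (hf : ∀ a b, IntervalIntegrable f volume a b) (x : ℝ) {s : Set ℝ} (hs : IsCompact s) :
    TendstoUniformlyOn (fun i y => ∫ z in x..y, f z * k i z)
      (fun y => ∫ z in x..y, f z * k₀ z) l s :=
  tendstoUniformlyOn_of_equicontinuousOn hs
    ((equicontinuous_integral_mul hk hK hf x).equicontinuousOn s)
    fun y _ => tendsto_integral_mul hk hK hk₀ hK₀ hlim (hf x y)

end WeakConvergence

section Rescaling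

variable {g : ℝ → ℝ} {m : ℝ}

theorem tendsto_div_nhdsNE_cobounded {𝕜 : Type*} [NormedDivisionRing 𝕜] {y : 𝕜} (hy : y ≠ 0) :
    Tendsto (fun ε => y / ε) (𝓝[≠] 0) (Bornology.cobounded 𝕜) := by
  simp only [div_eq_mul_inv]
  exact (tendsto_mul_left_cobounded hy).comp tendsto_inv₀_nhdsNE_zero

theorem tendsto_integral_zero_comp_div
    (hmean : Tendsto (fun t => (1 / t) * ∫ z in (0 : ℝ)..t, g z) (Bornology.cobounded ℝ) (𝓝 m))
    (y : ℝ) : Tendsto (fun ε => ∫ z in (0 : ℝ)..y, g (z / ε)) (𝓝[≠] 0) (𝓝 (y * m)) := by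
  rcases eq_or_ne y 0 with rfl | hy
  · simp only [integral_same, zero_mul, tendsto_const_nhds]
  refine ((hmean.comp (tendsto_div_nhdsNE_cobounded hy)).const_mul y).congr' ?_
  filter_upwards [self_mem_nhdsWithin] with ε hε
  rw [integral_comp_div _ hε, zero_div, Function.comp_apply, smul_eq_mul]
  field_simp

theorem tendsto_integral_comp_div (hg : ∀ a b, IntervalIntegrable g volume a b)
    (hmean : Tendsto (fun t => (1 / t) * ∫ z in (0 : ℝ)..t, g z) (Bornology.cobounded ℝ) (𝓝 m))
    (a b : ℝ) :
    Tendsto (fun ε => ∫ z in a..b, g (z / ε)) (𝓝[≠] 0) (𝓝 (∫ _ in a..b, m)) := by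
  rw [intervalIntegral.integral_const, smul_eq_mul, sub_mul]
  refine ((tendsto_integral_zero_comp_div hmean b).sub
    (tendsto_integral_zero_comp_div hmean a)).congr' ?_
  filter_upwards [self_mem_nhdsWithin] with ε hε
  simp only [integral_comp_div _ hε, zero_div, ← smul_sub]
  rw [integral_interval_sub_left (hg 0 _) (hg 0 _)]

end Rescaling

theorem stmt2_general {g : ℝ → ℝ} (hg : Measurable g) {K : ℝ} (hK : ∀ z, |g z| ≤ K) {m : ℝ}
    (hmean : Tendsto (fun t => (1 / t) * ∫ z in (0 : ℝ)..t, g z) (Bornology.cobounded ℝ) (𝓝 m))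
    {f : ℝ → ℝ} (hf : ∀ a b, IntervalIntegrable f volume a b) (x : ℝ) {s : Set ℝ}
    (hs : IsCompact s) :
    TendstoUniformlyOn (fun ε y => ∫ z in x..y, f z * g (z / ε))
      (fun y => m * ∫ z in x..y, f z) (𝓝[≠] 0) s := by
  have hgi : ∀ a b, IntervalIntegrable g volume a b := fun _ _ =>
    intervalIntegrable_of_ae_bound hg.aestronglyMeasurable (.of_forall hK)
  have hgε : ∀ ε, AEStronglyMeasurable fun z => g (z / ε) := fun ε =>
    (hg.comp (measurable_id.div_const ε)).aestronglyMeasurable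
  simp only [mul_comm m, ← intervalIntegral.integral_mul_const]
  exact tendstoUniformlyOn_integral_mul (K := max K |m|) hgε
    (fun _ => .of_forall fun _ => (hK _).trans (le_max_left _ _))
    aestronglyMeasurable_const (.of_forall fun _ => le_max_right _ _)
    (tendsto_integral_comp_div hgi hmean) hf x hs

/-- deterministic content of Proposition 3.11.
Let `g : ℝ → ℝ` be bounded and measurable with `(1/x) ∫₀ˣ g(z) dz → m` as `x → ±∞`.
Then for every continuous `f`, every `x ∈ ℝ` and `N > 0`,
`sup_{|y−x| ≤ N} |∫ₓʸ f(z) g(z/ε) dz − m ∫ₓʸ f(z) dz| → 0` as `ε → 0⁺`. -/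
theorem stmt2 (g : ℝ → ℝ) (hg : Measurable g) (K : ℝ) (hK : ∀ z, |g z| ≤ K) (m : ℝ)
    (htop : Tendsto (fun x => (1 / x) * ∫ z in (0:ℝ)..x, g z) atTop (nhds m))
    (hbot : Tendsto (fun x => (1 / x) * ∫ z in (0:ℝ)..x, g z) atBot (nhds m))
    (f : ℝ → ℝ) (hf : Continuous f) (x : ℝ) (N : ℝ) (hN : 0 < N) :
    TendstoUniformlyOn (fun ε y => ∫ z in x..y, f z * g (z / ε))
      (fun y => m * ∫ z in x..y, f z) (nhdsWithin 0 (Set.Ioi 0)) {y : ℝ | |y - x| ≤ N} := by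
  have hmean := (hbot.sup htop).mono_left IsOrderBornology.cobounded_le_atBot_sup_atTop
  exact fun u hu => nhdsGT_le_nhdsNE 0
    (stmt2_general hg hK hmean hf.intervalIntegrable x (isCompact_closedBall x N) u hu)
end

section
/- Let E and E' be Polish spaces with their Borel σ-algebras, (Σ, 𝒜, P) a probability space, μ a Borel probability measure on E and ν a Borel probability measure on E'. For each n, let X_n : Σ → E be measurable and let κ_n be a Markov kernel from Σ to E'. Assume: (i) the laws of X_n converge weakly to μ; (ii) for every bounded continuous Θ : E' → ℝ, for P-a.e. σ, ∫ Θ(y) κ_n(σ, dy) → ∫ Θ dν as n → ∞. Then the probability measures π_n on E × E' determined by π_n(A × B) = ∫_Σ 1_A(X_n(σ)) κ_n(σ, B) P(dσ) converge weakly to the product measure μ ⊗ ν. -/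
open MeasureTheory ProbabilityTheory Filter Set

open Topology TopologicalSpace
open scoped BoundedContinuousFunction

/-!
Tensor products `G ⊗ Θ` of bounded continuous functions form a convergence-determining class on a
product of separable metrizable spaces: embedding both factors in the Hilbert cube reduces this to
compact spaces, where the laws stay in a compact set of measures and every cluster point is
identified by its integrals against tensor products. Against `G ⊗ Θ`, the annealed law integrates to
`∫ G (X_n) (∫ Θ dκ_n) dP`; the inner integral is bounded and converges almost surely to a constant,
so it decouples from `G (X_n)` in the limit.
-/

/-- The tensor product `G ⊗ Θ : (y, z) ↦ G y * Θ z` of two bounded continuous functions, bundled as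
a test function for weak convergence on `Y × Z`. -/
def boundedContinuousTensor {Y Z : Type*} [TopologicalSpace Y] [TopologicalSpace Z]
    (G : Y →ᵇ ℝ) (Θ : Z →ᵇ ℝ) : Y × Z →ᵇ ℝ :=
  G.compContinuous ⟨Prod.fst, continuous_fst⟩ * Θ.compContinuous ⟨Prod.snd, continuous_snd⟩

section WeakConvergence

variable {ι : Type*} {l : Filter ι}

theorem tendsto_probabilityMeasure_of_tendsto_map_of_isInducing [l.IsCountablyGenerated]
    {Y Z : Type*} [MeasurableSpace Y] [TopologicalSpace Y] [OpensMeasurableSpace Y]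
    [MeasurableSpace Z] [TopologicalSpace Z] [BorelSpace Z] [HasOuterApproxClosed Z]
    {φ : Y → Z} (hφ : IsInducing φ) {p : ι → ProbabilityMeasure Y} {p₀ : ProbabilityMeasure Y}
    (h : Tendsto (fun i => (p i).map hφ.continuous.measurable.aemeasurable) l
      (𝓝 (p₀.map hφ.continuous.measurable.aemeasurable))) :
    Tendsto p l (𝓝 p₀) := by
  refine tendsto_of_forall_isOpen_le_liminf' fun U hU => ?_
  obtain ⟨V, hV, rfl⟩ := hφ.isOpen_iff.1 hU
  simpa only [ProbabilityMeasure.toMeasure_map,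
    Measure.map_apply hφ.continuous.measurable hV.measurableSet] using
    ProbabilityMeasure.le_liminf_measure_open_of_tendsto h hV

theorem exists_isInducing_hilbertCube (Y : Type*) [TopologicalSpace Y] [PseudoMetrizableSpace Y]
    [SecondCountableTopology Y] : ∃ φ : Y → ℕ → unitInterval, IsInducing φ := by
  let : PseudoMetricSpace Y := pseudoMetrizableSpacePseudoMetric Y
  have : SeparableSpace (SeparationQuotient Y) :=
    SeparationQuotient.surjective_mk.denseRange.separableSpace SeparationQuotient.continuous_mk
  obtain ⟨ψ, hψ⟩ := Metric.PiNatEmbed.exists_embedding_to_hilbert_cube (X := SeparationQuotient Y)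
  exact ⟨ψ ∘ SeparationQuotient.mk, hψ.isInducing.comp SeparationQuotient.isInducing_mk⟩

theorem tendsto_probabilityMeasure_prod_of_compactSpace
    {K K' : Type*} [MeasurableSpace K] [TopologicalSpace K] [BorelSpace K] [CompactSpace K]
    [T2Space K] [HasOuterApproxClosed K] [MeasurableSpace K'] [TopologicalSpace K'] [BorelSpace K']
    [CompactSpace K'] [T2Space K'] [HasOuterApproxClosed K'] [BorelSpace (K × K')]
    {p : ι → ProbabilityMeasure (K × K')} {p₀ : ProbabilityMeasure (K × K')}
    (h : ∀ (G : K →ᵇ ℝ) (Θ : K' →ᵇ ℝ),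
      Tendsto (fun i => ∫ z, G z.1 * Θ z.2 ∂(p i : Measure (K × K'))) l
        (𝓝 (∫ z, G z.1 * Θ z.2 ∂(p₀ : Measure (K × K'))))) :
    Tendsto p l (𝓝 p₀) := by
  refine tendsto_nhds_of_unique_mapClusterPt fun q hq => ?_
  refine ProbabilityMeasure.toMeasure_injective
    (Measure.ext_of_integral_mul_boundedContinuousFunction fun G Θ => ?_)
  have hq_tensor : MapClusterPt (∫ z, G z.1 * Θ z.2 ∂(q : Measure (K × K'))) l
      fun i => ∫ z, G z.1 * Θ z.2 ∂(p i : Measure (K × K')) :=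
    hq.continuousAt_comp (ProbabilityMeasure.continuous_integral_boundedContinuousFunction
      (boundedContinuousTensor G Θ)).continuousAt
  exact eq_of_nhds_neBot (hq_tensor.clusterPt.mono (h G Θ))

theorem tendsto_probabilityMeasure_prod_of_tendsto_integral_mul [l.IsCountablyGenerated]
    {E E' : Type*} [MeasurableSpace E] [TopologicalSpace E] [OpensMeasurableSpace E]
    [PseudoMetrizableSpace E] [SecondCountableTopology E]
    [MeasurableSpace E'] [TopologicalSpace E'] [OpensMeasurableSpace E']
    [PseudoMetrizableSpace E'] [SecondCountableTopology E']
    {p : ι → ProbabilityMeasure (E × E')} {p₀ : ProbabilityMeasure (E × E')}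
    (h : ∀ (G : E →ᵇ ℝ) (Θ : E' →ᵇ ℝ),
      Tendsto (fun i => ∫ z, G z.1 * Θ z.2 ∂(p i : Measure (E × E'))) l
        (𝓝 (∫ z, G z.1 * Θ z.2 ∂(p₀ : Measure (E × E'))))) :
    Tendsto p l (𝓝 p₀) := by
  obtain ⟨φ, hφ⟩ := exists_isInducing_hilbertCube E
  obtain ⟨ψ, hψ⟩ := exists_isInducing_hilbertCube E'
  have hφψ : IsInducing (Prod.map φ ψ) := hφ.prodMap hψ
  refine tendsto_probabilityMeasure_of_tendsto_map_of_isInducing hφψ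
    (tendsto_probabilityMeasure_prod_of_compactSpace fun G Θ => ?_)
  have integral_map_tensor (q : ProbabilityMeasure (E × E')) :
      ∫ z, G z.1 * Θ z.2 ∂(q.map hφψ.continuous.measurable.aemeasurable).toMeasure =
        ∫ z, G (φ z.1) * Θ (ψ z.2) ∂(q : Measure (E × E')) :=
    integral_map hφψ.continuous.measurable.aemeasurable
      (boundedContinuousTensor G Θ).continuous.aestronglyMeasurable
  simp only [integral_map_tensor]
  exact h (G.compContinuous ⟨φ, hφ.continuous⟩) (Θ.compContinuous ⟨ψ, hψ.continuous⟩)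

end WeakConvergence

theorem tendsto_integral_mul_of_tendsto_ae_const {S ι : Type*} [MeasurableSpace S]
    {P : Measure S} [IsFiniteMeasure P] {l : Filter ι} [l.IsCountablyGenerated]
    {f g : ι → S → ℝ} {a b C D : ℝ}
    (hf_meas : ∀ i, AEStronglyMeasurable (f i) P) (hf_bound : ∀ i, ∀ᵐ σ ∂P, ‖f i σ‖ ≤ C)
    (hf : Tendsto (fun i => ∫ σ, f i σ ∂P) l (𝓝 a))
    (hg_meas : ∀ i, AEStronglyMeasurable (g i) P) (hg_bound : ∀ i, ∀ᵐ σ ∂P, ‖g i σ‖ ≤ D)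
    (hg : ∀ᵐ σ ∂P, Tendsto (fun i => g i σ) l (𝓝 b)) :
    Tendsto (fun i => ∫ σ, f i σ * g i σ ∂P) l (𝓝 (a * b)) := by
  have hf_int (i) : Integrable (f i) P := .of_bound (hf_meas i) C (hf_bound i)
  have hg_int (i) : Integrable (g i) P := .of_bound (hg_meas i) D (hg_bound i)
  have hgb_int (i) : Integrable (fun σ => g i σ - b) P := (hg_int i).sub (integrable_const b)
  have tendsto_integral_norm : Tendsto (fun i => ∫ σ, ‖g i σ - b‖ ∂P) l (𝓝 0) := by
    rw [← integral_zero S ℝ (μ := P)]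
    refine tendsto_integral_filter_of_dominated_convergence (fun _ => D + ‖b‖)
      (.of_forall fun i => (hgb_int i).norm.aestronglyMeasurable) (.of_forall fun i => ?_)
      (integrable_const _) ?_
    · filter_upwards [hg_bound i] with σ hσ
      rw [norm_norm]
      exact (norm_sub_le _ _).trans (by gcongr)
    · filter_upwards [hg] with σ hσ
      exact tendsto_iff_norm_sub_tendsto_zero.1 hσ
  have tendsto_error : Tendsto (fun i => ∫ σ, f i σ * (g i σ - b) ∂P) l (𝓝 0) := by
    refine squeeze_zero_norm (a := fun i => C * ∫ σ, ‖g i σ - b‖ ∂P) (fun i => ?_)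
      (by simpa only [mul_zero] using tendsto_integral_norm.const_mul C)
    rw [← integral_const_mul]
    refine norm_integral_le_of_norm_le ((hgb_int i).norm.const_mul C) ?_
    filter_upwards [hf_bound i] with σ hσ
    rw [norm_mul]
    gcongr
  have integral_mul_eq (i) :
      ∫ σ, f i σ * g i σ ∂P = ∫ σ, f i σ * (g i σ - b) ∂P + (∫ σ, f i σ ∂P) * b := by
    rw [← integral_mul_const, ← integral_add ((hgb_int i).bdd_mul (hf_meas i) (hf_bound i))
      ((hf_int i).mul_const b)]
    simp only [mul_sub, sub_add_cancel]
  simpa only [integral_mul_eq, zero_add] using tendsto_error.add (hf.mul_const b)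

section AnnealedLaw

variable {S E E' : Type*} [MeasurableSpace S] [MeasurableSpace E] [MeasurableSpace E']
  {P : Measure S} {X : S → E} {κ : Kernel S E'}

theorem map_prodMap_id_compProd_prod [SFinite P] [IsSFiniteKernel κ] (hX : Measurable X)
    {A : Set E} {B : Set E'} (hA : MeasurableSet A) (hB : MeasurableSet B) :
    (P ⊗ₘ κ).map (Prod.map X id) (A ×ˢ B) = ∫⁻ σ in X ⁻¹' A, κ σ B ∂P := by
  rw [Measure.map_apply (hX.prodMap measurable_id) (hA.prod hB), preimage_prod_map_prod,
    preimage_id, Measure.compProd_apply_prod (hX hA) hB]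

theorem eq_map_prodMap_id_compProd [IsFiniteMeasure P] [IsFiniteKernel κ] (hX : Measurable X)
    {π : Measure (E × E')}
    (hπ : ∀ (A : Set E) (B : Set E'), MeasurableSet A → MeasurableSet B →
      π (A ×ˢ B) = ∫⁻ σ in X ⁻¹' A, κ σ B ∂P) :
    π = (P ⊗ₘ κ).map (Prod.map X id) :=
  .symm <| Measure.ext_prod fun hA hB =>
    (map_prodMap_id_compProd_prod hX hA hB).trans (hπ _ _ hA hB).symm

theorem integral_mul_map_prodMap_id_compProd [SFinite P] [IsSFiniteKernel κ] (hX : Measurable X)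
    {G : E → ℝ} {Θ : E' → ℝ}
    (h_int : Integrable (fun z => G z.1 * Θ z.2) ((P ⊗ₘ κ).map (Prod.map X id))) :
    ∫ z, G z.1 * Θ z.2 ∂(P ⊗ₘ κ).map (Prod.map X id) = ∫ σ, G (X σ) * ∫ y, Θ y ∂κ σ ∂P := by
  have hXid : Measurable (Prod.map X (id : E' → E')) := hX.prodMap measurable_id
  calc ∫ z, G z.1 * Θ z.2 ∂(P ⊗ₘ κ).map (Prod.map X id)
      = ∫ z, G (X z.1) * Θ z.2 ∂(P ⊗ₘ κ) :=
        integral_map hXid.aemeasurable h_int.aestronglyMeasurable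
    _ = ∫ σ, ∫ y, G (X σ) * Θ y ∂κ σ ∂P :=
        Measure.integral_compProd (h_int.comp_measurable hXid)
    _ = ∫ σ, G (X σ) * ∫ y, Θ y ∂κ σ ∂P := by simp only [integral_const_mul]

end AnnealedLaw

theorem stmt5_general {E : Type*} [MeasurableSpace E] [TopologicalSpace E]
    [OpensMeasurableSpace E] [PseudoMetrizableSpace E] [SecondCountableTopology E]
    {E' : Type*} [MeasurableSpace E'] [TopologicalSpace E'] [OpensMeasurableSpace E']
    [PseudoMetrizableSpace E'] [SecondCountableTopology E']
    {S : Type*} [MeasurableSpace S] (P : Measure S) [IsProbabilityMeasure P]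
    (μ : Measure E) [IsProbabilityMeasure μ] (ν : Measure E') [IsProbabilityMeasure ν]
    {ι : Type*} {l : Filter ι} [l.IsCountablyGenerated]
    (X : ι → S → E) (hX : ∀ i, Measurable (X i))
    (κ : ι → Kernel S E') [∀ i, IsMarkovKernel (κ i)]
    (h1 : ∀ G : E →ᵇ ℝ, Tendsto (fun i => ∫ σ, G (X i σ) ∂P) l (𝓝 (∫ x, G x ∂μ)))
    (h2 : ∀ Θ : E' →ᵇ ℝ,
      ∀ᵐ σ ∂P, Tendsto (fun i => ∫ y, Θ y ∂(κ i σ)) l (𝓝 (∫ y, Θ y ∂ν))) :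
    ∀ F : E × E' →ᵇ ℝ,
      Tendsto (fun i => ∫ z, F z ∂(P ⊗ₘ κ i).map (Prod.map (X i) id)) l
        (𝓝 (∫ z, F z ∂(μ.prod ν))) := by
  have hXid (i) : Measurable (Prod.map (X i) (id : E' → E')) := (hX i).prodMap measurable_id
  let p (i : ι) : ProbabilityMeasure (E × E') :=
    ⟨(P ⊗ₘ κ i).map (Prod.map (X i) id), Measure.isProbabilityMeasure_map (hXid i).aemeasurable⟩
  let p₀ : ProbabilityMeasure (E × E') := ⟨μ.prod ν, inferInstance⟩
  suffices Tendsto p l (𝓝 p₀) from ProbabilityMeasure.tendsto_iff_forall_integral_tendsto.1 this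
  refine tendsto_probabilityMeasure_prod_of_tendsto_integral_mul fun G Θ => ?_
  have integral_p (i) :
      ∫ z, G z.1 * Θ z.2 ∂(p i : Measure (E × E')) = ∫ σ, G (X i σ) * ∫ y, Θ y ∂κ i σ ∂P :=
    integral_mul_map_prodMap_id_compProd (hX i)
      (BoundedContinuousFunction.integrable _ (boundedContinuousTensor G Θ))
  have integral_p₀ :
      ∫ z, G z.1 * Θ z.2 ∂(p₀ : Measure (E × E')) = (∫ x, G x ∂μ) * ∫ y, Θ y ∂ν :=
    integral_prod_mul G Θ
  simp only [integral_p, integral_p₀]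
  exact tendsto_integral_mul_of_tendsto_ae_const
    (fun i => (G.continuous.measurable.comp (hX i)).aestronglyMeasurable)
    (fun i => .of_forall fun σ => G.norm_coe_le_norm (X i σ)) (h1 G)
    (fun i => Θ.continuous.stronglyMeasurable.integral_kernel.aestronglyMeasurable)
    (fun i => .of_forall fun σ => Θ.norm_integral_le_norm (κ i σ)) (h2 Θ)

/-- abstract decoupling principle behind Proposition 3.7.
Let `E, E'` be Polish spaces, `(Σ,𝒜,P)` a probability space, `μ, ν` Borel probability
measures on `E, E'`.  Let `X_n : Σ → E` be measurable and `κ_n` Markov kernels from `Σ`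
to `E'` such that (i) the laws of `X_n` converge weakly to `μ` and (ii) for every bounded
continuous `Θ`, `∫ Θ dκ_n(σ,·) → ∫ Θ dν` for `P`-a.e. `σ`.  Then the measures `π_n` on
`E × E'` determined by `π_n(A × B) = ∫ 1_A(X_n(σ)) κ_n(σ,B) P(dσ)` converge weakly to
the product `μ ⊗ ν`. -/
theorem stmt5 {E : Type*} [MeasurableSpace E] [TopologicalSpace E] [PolishSpace E]
    [BorelSpace E]
    {E' : Type*} [MeasurableSpace E'] [TopologicalSpace E'] [PolishSpace E'] [BorelSpace E']
    {S : Type*} [MeasurableSpace S] (P : Measure S) [IsProbabilityMeasure P]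
    (μ : Measure E) [IsProbabilityMeasure μ] (ν : Measure E') [IsProbabilityMeasure ν]
    (X : ℕ → S → E) (hX : ∀ n, Measurable (X n))
    (κ : ℕ → Kernel S E') (hκ : ∀ n, IsMarkovKernel (κ n))
    (π : ℕ → Measure (E × E')) (hπprob : ∀ n, IsProbabilityMeasure (π n))
    (hπ : ∀ (n : ℕ) (A : Set E) (B : Set E'), MeasurableSet A → MeasurableSet B →
      π n (A ×ˢ B) = ∫⁻ σ in (X n) ⁻¹' A, κ n σ B ∂P)
    (h1 : ∀ G : BoundedContinuousFunction E ℝ,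
      Tendsto (fun n => ∫ σ, G (X n σ) ∂P) atTop (nhds (∫ x, G x ∂μ)))
    (h2 : ∀ Θ : BoundedContinuousFunction E' ℝ,
      ∀ᵐ σ ∂P, Tendsto (fun n => ∫ y, Θ y ∂(κ n σ)) atTop (nhds (∫ y, Θ y ∂ν))) :
    ∀ F : BoundedContinuousFunction (E × E') ℝ,
      Tendsto (fun n => ∫ p, F p ∂(π n)) atTop (nhds (∫ p, F p ∂(μ.prod ν))) := by
  simpa only [fun n => eq_map_prodMap_id_compProd (hX n) (hπ n)] using
    stmt5_general P μ ν X hX κ h1 h2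
end

section
/- For every γ ∈ (0, 1/2) and every ε₀ > 0, the family of random variables {ξ_{γ,ε} : 0 < ε ≤ ε₀}, where ξ_{γ,ε} := sup_{x ∈ ℝ} |W_ε(x)| / (1+|x|)^{1−γ}, is tight: for every δ > 0 there exists M > 0 such that P(ξ_{γ,ε} ≥ M) ≤ δ for all ε ∈ (0, ε₀]. Indeed, there is a constant C′ (depending on γ, ε₀ and the parameters of the field c) with P(ξ_{γ,ε} ≥ M) ≤ C′/M² for all M > 0 and all ε ∈ (0, ε₀]. -/
open MeasureTheory ProbabilityTheory Filter Set

/-- The σ-algebra `ℱ_x = σ(c(y) : y ≤ x)` generated by the field up to `x`. -/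
def sigmaPast {S : Type*} [MeasurableSpace S] (c : ℝ → S → ℝ) (x : ℝ) : MeasurableSpace S :=
  ⨆ y ∈ Set.Iic x, MeasurableSpace.comap (c y) inferInstance

/-- The σ-algebra `ℱ^x = σ(c(y) : y ≥ x)` generated by the field from `x` on. -/
def sigmaFuture {S : Type*} [MeasurableSpace S] (c : ℝ → S → ℝ) (x : ℝ) : MeasurableSpace S :=
  ⨆ y ∈ Set.Ici x, MeasurableSpace.comap (c y) inferInstance

/-- The φ-mixing coefficient
`φ(h) = sup { |P(B|A) − P(B)| : x ∈ ℝ, A ∈ ℱ_x, P(A) > 0, B ∈ ℱ^{x+h} }`. -/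
noncomputable def phiMix {S : Type*} [MeasurableSpace S] (P : Measure S)
    (c : ℝ → S → ℝ) (h : ℝ) : ℝ :=
  sSup {d : ℝ | ∃ (x : ℝ) (A B : Set S), MeasurableSet[sigmaPast c x] A ∧
    MeasurableSet[sigmaFuture c (x + h)] B ∧ 0 < P A ∧
    d = |(P (A ∩ B)).toReal / (P A).toReal - (P B).toReal|}

/-- The rescaled field `W_ε(x) = (1/(c̄ √ε)) ∫₀ˣ c(y/ε) dy`. -/
noncomputable def Weps {S : Type*} (c : ℝ → S → ℝ) (cbar ε x : ℝ) (σ : S) : ℝ :=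
  (1 / (cbar * Real.sqrt ε)) * ∫ y in (0:ℝ)..x, c (y / ε) σ

/-- All the standing assumptions on the random field `c` from Section 2 of the paper:
joint measurability, stationarity, centering, boundedness in `L^∞`, integrable covariance
with `c̄² = ∫ E[c(0)c(x)] dx > 0`, and φ-mixing with `∫₀^∞ φ(h)^{1/2} dh < ∞`. -/
structure FieldHyps {S : Type*} [MeasurableSpace S] (P : Measure S)
    (c : ℝ → S → ℝ) (cbar : ℝ) : Prop where
  meas : Measurable fun p : ℝ × S => c p.1 p.2
  stat : ∀ (h : ℝ) (n : ℕ) (x : Fin n → ℝ),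
    Measure.map (fun σ => fun i => c (x i + h) σ) P =
      Measure.map (fun σ => fun i => c (x i) σ) P
  mean : ∫ σ, c 0 σ ∂P = 0
  bdd : ∃ K : ℝ, ∀ᵐ σ ∂P, |c 0 σ| ≤ K
  covInt : Integrable (fun x => ∫ σ, c 0 σ * c x σ ∂P) MeasureTheory.volume
  cbar_pos : 0 < cbar
  cbar_sq : cbar ^ 2 = ∫ x, ∫ σ, c 0 σ * c x σ ∂P
  mix : IntegrableOn (fun h => Real.sqrt (phiMix P c h)) (Set.Ioi (0:ℝ))

/-!
Integrability of the covariance gives `E (∫_a^b c)² ≤ R (b - a)`, so Chebyshev's inequality controls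
`|∫_a^b c|` at a single pair of times. To control the maximum over an interval, cut time into
blocks of length `m` and run Ottaviani's first-entrance argument: the event that level `3 l` is
first exceeded at block `k` belongs to the past, the increment from block `k + 1` on to the future
at distance `m`, and φ-mixing replaces independence at the price of `φ(m)`. One fixed `m` with
`φ(m) < 1` is enough, as Chebyshev's bound is small at the levels `l` that matter; the skipped
block costs only `K m`, by boundedness.

This yields `P (sup_{|x| ≤ T} |W_ε x| ≥ l) ≤ D T / l²` for `T ≥ 1`, uniformly in `ε ≤ ε₀`. On the
dyadic shell `|x| ~ 2^j` the weight makes `l` comparable to `M 2^{j (1 - γ)}`, and the bounds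
`D 2^j / l²` sum up to a multiple of `M⁻²` because `1 - 2 (1 - γ) < 0`.
-/

section FirstEntrance

variable {S F : Type*} [SeminormedAddCommGroup F]

lemma measurableSet_disjointed_of_forall_le {m : MeasurableSpace S} {E : ℕ → Set S} {k : ℕ}
    (hE : ∀ j ≤ k, MeasurableSet (E j)) : MeasurableSet (disjointed E k) := by
  rw [disjointed_apply, Finset.sup_set_eq_biUnion]
  exact (hE k le_rfl).diff <| Finset.measurableSet_biUnion _ fun j hj =>
    hE j (Finset.mem_Iio.1 hj).le

variable [MeasurableSpace S] {P : Measure S} [IsFiniteMeasure P]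

lemma one_sub_mul_measureReal_biUnion_le {E : ℕ → Set S} {G : Set S} {n : ℕ} {θ : ℝ}
    (hE : ∀ k, MeasurableSet (E k))
    (hG : ∀ k ≤ n, P.real (disjointed E k \ G) ≤ θ * P.real (disjointed E k)) :
    (1 - θ) * P.real (⋃ k ≤ n, E k) ≤ P.real G := by
  have hsplit : (⋃ k ≤ n, E k) = ⋃ k ∈ Finset.Iic n, disjointed E k := by
    rw [biUnion_Iic_disjointed, partialSups_eq_biSup]
    rfl
  have hsum : P.real (⋃ k ≤ n, E k) = ∑ k ∈ Finset.Iic n, P.real (disjointed E k) := by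
    rw [hsplit]
    exact measureReal_biUnion_finset ((disjoint_disjointed E).set_pairwise _)
      fun k _ => .disjointed hE k
  have hdiff : P.real ((⋃ k ≤ n, E k) \ G) ≤ θ * P.real (⋃ k ≤ n, E k) := by
    calc P.real ((⋃ k ≤ n, E k) \ G)
        = P.real (⋃ k ∈ Finset.Iic n, disjointed E k \ G) := by
          simp only [hsplit, iUnion_sdiff]
      _ ≤ ∑ k ∈ Finset.Iic n, P.real (disjointed E k \ G) := measureReal_biUnion_finset_le _ _
      _ ≤ ∑ k ∈ Finset.Iic n, θ * P.real (disjointed E k) :=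
          Finset.sum_le_sum fun k hk => hG k (Finset.mem_Iic.1 hk)
      _ = θ * P.real (⋃ k ≤ n, E k) := by rw [hsum, Finset.mul_sum]
  have hcover : P.real (⋃ k ≤ n, E k) ≤ P.real G + P.real ((⋃ k ≤ n, E k) \ G) :=
    (measureReal_mono (by simp)).trans (measureReal_union_le G _)
  linarith

theorem ottaviani_of_first_entrance {X : ℕ → S → F} {n : ℕ} {u v w θ : ℝ}
    (hv : 0 ≤ v) (hw : 0 ≤ w) (hX : ∀ k, StronglyMeasurable (X k)) (hθ : 0 ≤ θ)
    (hjump : ∀ k < n, ∀ᵐ s ∂P, ‖X (k + 1) s - X k s‖ ≤ w)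
    (htail : ∀ k < n,
      P.real (disjointed (fun k => {s | u + v + w ≤ ‖X k s‖}) k ∩
          {s | v ≤ ‖X n s - X (k + 1) s‖}) ≤
        θ * P.real (disjointed (fun k => {s | u + v + w ≤ ‖X k s‖}) k)) :
    (1 - θ) * P.real {s | ∃ k ≤ n, u + v + w ≤ ‖X k s‖} ≤ P.real {s | u ≤ ‖X n s‖} := by
  have hunion : {s | ∃ k ≤ n, u + v + w ≤ ‖X k s‖} = ⋃ k ≤ n, {s | u + v + w ≤ ‖X k s‖} := by
    ext s
    simp
  rw [hunion]
  refine one_sub_mul_measureReal_biUnion_le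
    (fun k => measurableSet_le measurable_const (hX k).norm.measurable) fun k hk => ?_
  rcases hk.lt_or_eq with hkn | rfl
  · refine le_trans ?_ (htail k hkn)
    refine ENNReal.toReal_mono (measure_ne_top _ _) (measure_mono_ae ?_)
    filter_upwards [hjump k hkn] with s hs ⟨hsk, hsn⟩
    refine ⟨hsk, ?_⟩
    have hentrance : u + v + w ≤ ‖X k s‖ := disjointed_subset _ k hsk
    have hend : ‖X n s‖ < u := not_le.1 hsn
    have htri : ‖X k s‖ ≤ ‖X n s‖ + ‖X n s - X (k + 1) s‖ + ‖X (k + 1) s - X k s‖ := by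
      calc ‖X k s‖ = ‖X n s - (X n s - X (k + 1) s) - (X (k + 1) s - X k s)‖ := by abel_nf
        _ ≤ _ := (norm_sub_le _ _).trans (by gcongr; exact norm_sub_le _ _)
    change v ≤ ‖X n s - X (k + 1) s‖
    linarith
  · have hempty : disjointed (fun k => {s | u + v + w ≤ ‖X k s‖}) k \ {s | u ≤ ‖X k s‖} = ∅ := by
      refine sdiff_eq_empty.2 ((disjointed_subset _ k).trans fun s hs => ?_)
      have : u + v + w ≤ ‖X k s‖ := hs
      change u ≤ ‖X k s‖
      linarith
    rw [hempty, measureReal_empty]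
    positivity

end FirstEntrance

section DyadicPeeling

variable {E F : Type*} [SeminormedAddCommGroup E] [SeminormedAddCommGroup F] {M α β p D : ℝ}

lemma exists_dyadic_of_le_iSup {w : E → F} (hβ : 0 ≤ β) (hM : 0 < M)
    (h : ENNReal.ofReal M ≤ ⨆ x, ENNReal.ofReal (‖w x‖ / (1 + ‖x‖) ^ β)) :
    ∃ (j : ℕ) (x : E), ‖x‖ ≤ 2 ^ (j + 1) ∧ M / 2 * (2 ^ j) ^ β ≤ ‖w x‖ := by
  have hhalf : ENNReal.ofReal (M / 2) < ENNReal.ofReal M :=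
    (ENNReal.ofReal_lt_ofReal_iff hM).2 (half_lt_self hM)
  obtain ⟨x, hx⟩ := lt_iSup_iff.1 (hhalf.trans_le h)
  have hxM : M / 2 < ‖w x‖ / (1 + ‖x‖) ^ β :=
    (ENNReal.ofReal_lt_ofReal_iff_of_nonneg (by positivity)).1 hx
  obtain ⟨j, hjx, hxj⟩ := exists_nat_pow_near (le_add_of_nonneg_right (norm_nonneg x)) one_lt_two
  refine ⟨j, x, by linarith, ?_⟩
  calc M / 2 * (2 ^ j) ^ β ≤ M / 2 * (1 + ‖x‖) ^ β := by gcongr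
    _ ≤ ‖w x‖ := ((lt_div_iff₀ (by positivity)).1 hxM).le

lemma dyadic_term_eq (D α β p : ℝ) (hM : 0 < M) (j : ℕ) :
    D * (2 ^ (j + 1)) ^ α / (M / 2 * (2 ^ j) ^ β) ^ p =
      D * 2 ^ (α + p) / M ^ p * (2 ^ (α - β * p)) ^ j := by
  have hpow (r : ℝ) : ((2 : ℝ) ^ j) ^ r = (2 ^ r) ^ j :=
    (Real.rpow_pow_comm zero_le_two r j).symm
  rw [pow_succ, Real.mul_rpow (by positivity) zero_le_two,
    Real.mul_rpow (by positivity) (by positivity), Real.div_rpow hM.le zero_le_two,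
    ← Real.rpow_mul (by positivity), hpow, hpow, Real.rpow_sub two_pos, Real.rpow_add two_pos,
    div_pow]
  field_simp

theorem measure_le_iSup_norm_div_rpow_le {S : Type*} [MeasurableSpace S] {P : Measure S}
    {W : E → S → F} (hD : 0 ≤ D) (hβ : 0 ≤ β) (hαβ : α < β * p)
    (hW : ∀ T l : ℝ, 1 ≤ T → 0 < l →
      P {s | ∃ x, ‖x‖ ≤ T ∧ l ≤ ‖W x s‖} ≤ ENNReal.ofReal (D * T ^ α / l ^ p)) (hM : 0 < M) :
    P {s | ENNReal.ofReal M ≤ ⨆ x, ENNReal.ofReal (‖W x s‖ / (1 + ‖x‖) ^ β)} ≤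
      ENNReal.ofReal (D * 2 ^ (α + p) / (1 - 2 ^ (α - β * p)) / M ^ p) := by
  have hr : (2 : ℝ) ^ (α - β * p) < 1 :=
    Real.rpow_lt_one_of_one_lt_of_neg one_lt_two (sub_neg.2 hαβ)
  have hr0 : (0 : ℝ) ≤ 2 ^ (α - β * p) := by positivity
  calc P {s | ENNReal.ofReal M ≤ ⨆ x, ENNReal.ofReal (‖W x s‖ / (1 + ‖x‖) ^ β)}
      ≤ P (⋃ j : ℕ, {s | ∃ x, ‖x‖ ≤ 2 ^ (j + 1) ∧ M / 2 * (2 ^ j) ^ β ≤ ‖W x s‖}) :=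
        measure_mono fun s hs => mem_iUnion.2 (exists_dyadic_of_le_iSup hβ hM hs)
    _ ≤ ∑' j : ℕ, P {s | ∃ x, ‖x‖ ≤ 2 ^ (j + 1) ∧ M / 2 * (2 ^ j) ^ β ≤ ‖W x s‖} :=
        measure_iUnion_le _
    _ ≤ ∑' j : ℕ, ENNReal.ofReal (D * 2 ^ (α + p) / M ^ p * (2 ^ (α - β * p)) ^ j) := by
        refine ENNReal.tsum_le_tsum fun j => ?_
        rw [← dyadic_term_eq D α β p hM j]
        exact hW _ _ (one_le_pow₀ one_le_two) (by positivity)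
    _ = ENNReal.ofReal (∑' j : ℕ, D * 2 ^ (α + p) / M ^ p * (2 ^ (α - β * p)) ^ j) :=
        (ENNReal.ofReal_tsum_of_nonneg (fun j => by positivity)
          ((summable_geometric_of_lt_one hr0 hr).mul_left _)).symm
    _ = ENNReal.ofReal (D * 2 ^ (α + p) / (1 - 2 ^ (α - β * p)) / M ^ p) := by
        rw [tsum_mul_left, tsum_geometric_of_lt_one hr0 hr]
        congr 1
        ring

end DyadicPeeling

section PhiMixing

variable {S : Type*} {c : ℝ → S → ℝ}

lemma sigmaPast_le [mS : MeasurableSpace S] (hc : ∀ y, Measurable (c y)) (x : ℝ) :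
    sigmaPast c x ≤ mS :=
  iSup₂_le fun y _ => (hc y).comap_le

lemma sigmaFuture_le [mS : MeasurableSpace S] (hc : ∀ y, Measurable (c y)) (x : ℝ) :
    sigmaFuture c x ≤ mS :=
  iSup₂_le fun y _ => (hc y).comap_le

variable [MeasurableSpace S]

lemma sigmaPast_mono : Monotone (sigmaPast c) :=
  fun _ _ h => biSup_mono fun _ hz => le_trans hz h

lemma measurable_sigmaPast {x y : ℝ} (h : y ≤ x) : Measurable[sigmaPast c x] (c y) :=
  Measurable.of_comap_le <| le_iSup₂_of_le (f := fun y (_ : y ∈ Iic x) =>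
    MeasurableSpace.comap (c y) inferInstance) y h le_rfl

lemma measurable_sigmaFuture {x y : ℝ} (h : x ≤ y) : Measurable[sigmaFuture c x] (c y) :=
  Measurable.of_comap_le <| le_iSup₂_of_le (f := fun y (_ : y ∈ Ici x) =>
    MeasurableSpace.comap (c y) inferInstance) y h le_rfl

variable {P : Measure S} [IsProbabilityMeasure P]

lemma abs_div_sub_le_phiMix {h x : ℝ} {A B : Set S} (hA : MeasurableSet[sigmaPast c x] A)
    (hB : MeasurableSet[sigmaFuture c (x + h)] B) (hPA : 0 < P A) :
    |P.real (A ∩ B) / P.real A - P.real B| ≤ phiMix P c h := by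
  refine le_csSup ⟨1, ?_⟩ ⟨x, A, B, hA, hB, hPA, rfl⟩
  rintro d ⟨x, A, B, -, -, -, rfl⟩
  have hcond : P.real (A ∩ B) / P.real A ∈ Icc 0 1 :=
    ⟨by positivity, div_le_one_of_le₀ (measureReal_mono inter_subset_left) measureReal_nonneg⟩
  have hB : P.real B ∈ Icc 0 1 := ⟨measureReal_nonneg, measureReal_le_one⟩
  exact (abs_sub_le_of_le_of_le hcond.1 hcond.2 hB.1 hB.2).trans_eq (sub_zero 1)

lemma measureReal_inter_le_mul_add_phiMix {h x : ℝ} {A B : Set S}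
    (hA : MeasurableSet[sigmaPast c x] A) (hB : MeasurableSet[sigmaFuture c (x + h)] B) :
    P.real (A ∩ B) ≤ (P.real B + phiMix P c h) * P.real A := by
  rcases eq_or_ne (P A) 0 with hPA | hPA
  · have hinter : P (A ∩ B) = 0 := measure_mono_null inter_subset_left hPA
    simp [Measure.real, hPA, hinter]
  · have hdiv := (abs_le.1 (abs_div_sub_le_phiMix hA hB (pos_iff_ne_zero.2 hPA))).2
    have hpos : 0 < P.real A := ENNReal.toReal_pos hPA (measure_ne_top _ _)
    rw [← div_le_iff₀ hpos]
    linarith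

lemma phiMix_nonneg (h : ℝ) : 0 ≤ phiMix P c h :=
  (abs_nonneg _).trans <| abs_div_sub_le_phiMix (x := 0) (A := univ) (B := univ)
    MeasurableSet.univ MeasurableSet.univ (by simp)

lemma measureReal_inter_le_norm_le_mul {h x v : ℝ} {A : Set S} {Z : S → ℝ}
    (hA : MeasurableSet[sigmaPast c x] A)
    (hZ : AEStronglyMeasurable[sigmaFuture c (x + h)] Z P) :
    P.real (A ∩ {s | v ≤ ‖Z s‖}) ≤ (P.real {s | v ≤ ‖Z s‖} + phiMix P c h) * P.real A := by
  have hB : MeasurableSet[sigmaFuture c (x + h)] {s | v ≤ ‖hZ.mk Z s‖} :=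
    measurableSet_le measurable_const hZ.stronglyMeasurable_mk.norm.measurable
  have hZB : {s | v ≤ ‖Z s‖} =ᵐ[P] {s | v ≤ ‖hZ.mk Z s‖} :=
    eventuallyEq_set.2 <| hZ.ae_eq_mk.mono fun s hs => by simp only [mem_ofPred_eq, hs]
  rw [measureReal_congr hZB, measureReal_congr (ae_eq_rfl.inter hZB)]
  exact measureReal_inter_le_mul_add_phiMix hA hB

theorem ottaviani_of_phiMix {X : ℕ → S → ℝ} {t : ℕ → ℝ} {n : ℕ} {u v w p h : ℝ}
    (hc : ∀ y, Measurable (c y)) (ht : Monotone t) (hv : 0 ≤ v) (hw : 0 ≤ w) (hp : 0 ≤ p)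
    (hpast : ∀ k, AEStronglyMeasurable[sigmaPast c (t k)] (X k) P)
    (hfuture : ∀ k < n, AEStronglyMeasurable[sigmaFuture c (t k + h)] (X n - X (k + 1)) P)
    (hjump : ∀ k < n, ∀ᵐ s ∂P, ‖X (k + 1) s - X k s‖ ≤ w)
    (htail : ∀ k < n, P.real {s | v ≤ ‖X n s - X (k + 1) s‖} ≤ p) :
    (1 - (p + phiMix P c h)) * P.real {s | ∃ k ≤ n, u + v + w ≤ ‖X k s‖} ≤
      P.real {s | u ≤ ‖X n s‖} := by
  set Y : ℕ → S → ℝ := fun k => (hpast k).mk (X k)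
  have hY (k : ℕ) : StronglyMeasurable[sigmaPast c (t k)] (Y k) :=
    (hpast k).stronglyMeasurable_mk
  have hXY : ∀ᵐ s ∂P, ∀ k, X k s = Y k s := ae_all_iff.2 fun k => (hpast k).ae_eq_mk
  have hexit : {s | ∃ k ≤ n, u + v + w ≤ ‖X k s‖} =ᵐ[P] {s | ∃ k ≤ n, u + v + w ≤ ‖Y k s‖} :=
    eventuallyEq_set.2 <| hXY.mono fun s hs => by simp only [mem_ofPred_eq, hs]
  have hend : {s | u ≤ ‖X n s‖} =ᵐ[P] {s | u ≤ ‖Y n s‖} :=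
    eventuallyEq_set.2 <| hXY.mono fun s hs => by simp only [mem_ofPred_eq, hs]
  rw [measureReal_congr hexit, measureReal_congr hend]
  refine ottaviani_of_first_entrance hv hw (fun k => (hY k).mono (sigmaPast_le hc _))
    (add_nonneg hp (phiMix_nonneg h)) (fun k hk => ?_) fun k hk => ?_
  · filter_upwards [hjump k hk, hXY] with s hs hsY
    rwa [← hsY, ← hsY]
  · have hZ : X n - X (k + 1) =ᵐ[P] Y n - Y (k + 1) :=
      hXY.mono fun s hs => by simp only [Pi.sub_apply, hs]
    have htailY : P.real {s | v ≤ ‖(Y n - Y (k + 1)) s‖} ≤ p := by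
      have hYX : {s | v ≤ ‖(Y n - Y (k + 1)) s‖} =ᵐ[P] {s | v ≤ ‖X n s - X (k + 1) s‖} :=
        eventuallyEq_set.2 <| hXY.mono fun s hs => by simp only [mem_ofPred_eq, Pi.sub_apply, hs]
      exact (measureReal_congr hYX).trans_le (htail k hk)
    have hentrance : MeasurableSet[sigmaPast c (t k)]
        (disjointed (fun k => {s | u + v + w ≤ ‖Y k s‖}) k) :=
      measurableSet_disjointed_of_forall_le fun j hj => measurableSet_le
        measurable_const ((hY j).mono (sigmaPast_mono (ht hj))).norm.measurable
    refine (measureReal_inter_le_norm_le_mul hentrance ((hfuture k hk).congr hZ)).trans ?_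
    gcongr

end PhiMixing

section BoundedField

variable {α S : Type*} [MeasurableSpace α] {μ : Measure α} {f : α → S → ℝ} {K : ℝ}

section

variable [MeasurableSpace S] {P : Measure S}

lemma ae_ae_abs_le_swap [SFinite μ] [SFinite P] (hf : Measurable (Function.uncurry f))
    (hK : ∀ᵐ y ∂μ, ∀ᵐ s ∂P, |f y s| ≤ K) : ∀ᵐ s ∂P, ∀ᵐ y ∂μ, |f y s| ≤ K :=
  (Measure.ae_ae_comm (p := fun y s => |f y s| ≤ K)
    (measurableSet_le hf.norm measurable_const)).1 hK

variable [IsFiniteMeasure μ]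

lemma integral_mul_integral_swap [SFinite P] {Z : S → ℝ} (hf : Measurable (Function.uncurry f))
    (hK : ∀ᵐ y ∂μ, ∀ᵐ s ∂P, |f y s| ≤ K) (hZ : Integrable Z P) :
    ∫ s, Z s * ∫ y, f y s ∂μ ∂P = ∫ y, ∫ s, Z s * f y s ∂P ∂μ := by
  simp_rw [← integral_const_mul]
  refine integral_integral_swap ?_
  have hfK : ∀ᵐ q ∂P.prod μ, ‖f q.2 q.1‖ ≤ K :=
    (Measure.ae_prod_iff_ae_ae (measurableSet_le (hf.comp measurable_swap).norm
      measurable_const)).2 (ae_ae_abs_le_swap hf hK)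
  exact (hZ.comp_fst μ).mul_bdd (hf.comp measurable_swap).aestronglyMeasurable hfK

lemma memLp_integral_of_ae_abs_le [IsFiniteMeasure P] {p : ENNReal}
    (hf : Measurable (Function.uncurry f)) (hK : ∀ᵐ y ∂μ, ∀ᵐ s ∂P, |f y s| ≤ K) :
    MemLp (fun s => ∫ y, f y s ∂μ) p P := by
  refine .of_bound ?_ (K * μ.real univ) <|
    (ae_ae_abs_le_swap hf hK).mono fun s hs => norm_integral_le_of_norm_le_const hs
  have hswap : StronglyMeasurable fun q : S × α => f q.2 q.1 :=
    (hf.comp measurable_swap).stronglyMeasurable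
  exact hswap.integral_prod_right'.aestronglyMeasurable

end

lemma integral_mul_sub_condExp_eq_zero {m : MeasurableSpace S} [mS : MeasurableSpace S]
    {P : Measure S} [IsFiniteMeasure P] {X g : S → ℝ} (hm : m ≤ mS) (hX : MemLp X 2 P)
    (hg : AEStronglyMeasurable[m] g P) (hg2 : MemLp g 2 P) :
    ∫ s, (X s - P[X | m] s) * g s ∂P = 0 := by
  have hXg : Integrable (g * X) P := hg2.integrable_mul hX
  have hEXg : Integrable (g * P[X | m]) P := hg2.integrable_mul (hX.condExp one_le_two)
  have hpull : P[g * X | m] =ᵐ[P] g * P[X | m] :=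
    condExp_mul_of_aestronglyMeasurable_left hg hXg (hX.integrable one_le_two)
  calc ∫ s, (X s - P[X | m] s) * g s ∂P
      = ∫ s, (g * X) s - (g * P[X | m]) s ∂P := by
        congr with s
        simp only [Pi.mul_apply]
        ring
    _ = ∫ s, (g * X) s ∂P - ∫ s, P[g * X | m] s ∂P := by
        rw [integral_sub hXg hEXg, integral_congr_ae hpull]
    _ = 0 := by rw [integral_condExp hm, sub_self]

-- A direct argument would need joint measurability in the product with the smaller σ-algebra `m`,
-- which is not available; instead the residual `X - P[X | m]` is orthogonal to every `f y`, hence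
-- to `X` by Fubini, hence to itself.
lemma aestronglyMeasurable_integral_of_ae [IsFiniteMeasure μ] {m : MeasurableSpace S}
    [mS : MeasurableSpace S] {P : Measure S} [IsFiniteMeasure P] (hm : m ≤ mS)
    (hf : Measurable (Function.uncurry f)) (hK : ∀ᵐ y ∂μ, ∀ᵐ s ∂P, |f y s| ≤ K)
    (hfm : ∀ᵐ y ∂μ, AEStronglyMeasurable[m] (f y) P) :
    AEStronglyMeasurable[m] (fun s => ∫ y, f y s ∂μ) P := by
  set X : S → ℝ := fun s => ∫ y, f y s ∂μ
  set Z : S → ℝ := fun s => X s - P[X | m] s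
  have hX : MemLp X 2 P := memLp_integral_of_ae_abs_le hf hK
  have hEX : MemLp (P[X | m]) 2 P := hX.condExp one_le_two
  have hZ : MemLp Z 2 P := hX.sub hEX
  have hZX : ∫ s, Z s * X s ∂P = 0 := by
    rw [integral_mul_integral_swap hf hK (hZ.integrable one_le_two)]
    refine integral_eq_zero_of_ae ?_
    filter_upwards [hK, hfm] with y hyK hym
    exact integral_mul_sub_condExp_eq_zero hm hX hym (.of_bound (hym.mono hm) K hyK)
  have hZEX : ∫ s, Z s * P[X | m] s ∂P = 0 :=
    integral_mul_sub_condExp_eq_zero hm hX stronglyMeasurable_condExp.aestronglyMeasurable hEX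
  have hZZ : ∫ s, Z s * Z s ∂P = 0 := by
    calc ∫ s, Z s * Z s ∂P = ∫ s, (Z * X) s - (Z * P[X | m]) s ∂P := by
          simp only [Z, Pi.mul_apply, mul_sub]
      _ = ∫ s, Z s * X s ∂P - ∫ s, Z s * P[X | m] s ∂P :=
          integral_sub (hZ.integrable_mul hX) (hZ.integrable_mul hEX)
      _ = 0 := by rw [hZX, hZEX, sub_zero]
  have hZ0 : (fun s => Z s * Z s) =ᵐ[P] 0 :=
    (integral_eq_zero_iff_of_nonneg (fun s => mul_self_nonneg (Z s))
      (hZ.integrable_mul hZ)).1 hZZ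
  refine stronglyMeasurable_condExp.aestronglyMeasurable.congr (f := P[X | m]) ?_
  filter_upwards [hZ0] with s hs
  exact (sub_eq_zero.1 (mul_self_eq_zero.1 hs)).symm

end BoundedField

section IntervalIntegral

lemma intervalIntegrable_of_ae_abs_le {g : ℝ → ℝ} {K : ℝ} (hg : Measurable g)
    (hK : ∀ᵐ y, |g y| ≤ K) (a b : ℝ) : IntervalIntegrable g volume a b :=
  intervalIntegrable_iff.2 <| Measure.integrableOn_of_bounded (by simp)
    hg.aestronglyMeasurable (ae_restrict_of_ae hK)

lemma abs_intervalIntegral_le_of_ae_abs_le {g : ℝ → ℝ} {K : ℝ} (hK : ∀ᵐ y, |g y| ≤ K)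
    (a b : ℝ) : |∫ y in a..b, g y| ≤ K * |b - a| :=
  intervalIntegral.norm_integral_le_of_norm_le_const_ae (f := g) (hK.mono fun _ hy _ => hy)

lemma exists_grid_le_abs_intervalIntegral {g : ℝ → ℝ} {K a m v w x : ℝ} {n : ℕ}
    (hg : Measurable g) (hK : ∀ᵐ y, |g y| ≤ K) (hm : 0 < m) (hw : K * m ≤ w)
    (hx : x ∈ Icc a (a + n * m)) (hvw : v + w ≤ |∫ y in a..x, g y|) :
    ∃ k ≤ n, v ≤ |∫ y in a..a + k * m, g y| := by
  have hx0 : 0 ≤ (x - a) / m := div_nonneg (sub_nonneg.2 hx.1) hm.le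
  have hxn : (x - a) / m ≤ n := (div_le_iff₀ hm).2 (by linarith [hx.2])
  set k := ⌊(x - a) / m⌋₊
  have hkx : k * m ≤ x - a := (le_div_iff₀ hm).1 (Nat.floor_le hx0)
  have hxk : x - a < (k + 1) * m := (div_lt_iff₀ hm).1 (Nat.lt_floor_add_one _)
  have hadd := intervalIntegral.integral_add_adjacent_intervals
    (intervalIntegrable_of_ae_abs_le hg hK a (a + k * m))
    (intervalIntegrable_of_ae_abs_le hg hK (a + k * m) x)
  have hK0 : 0 ≤ K := (abs_nonneg _).trans hK.exists.choose_spec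
  have hrest : |∫ y in a + k * m..x, g y| ≤ w := by
    refine (abs_intervalIntegral_le_of_ae_abs_le hK _ _).trans (le_trans ?_ hw)
    gcongr
    exact abs_le.2 ⟨by linarith, by linarith⟩
  refine ⟨k, Nat.floor_le_of_le hxn, ?_⟩
  rw [← hadd] at hvw
  linarith [abs_add_le (∫ y in a..a + k * m, g y) (∫ y in a + k * m..x, g y)]

variable {S : Type*} [MeasurableSpace S] {P : Measure S} [IsFiniteMeasure P] {c : ℝ → S → ℝ}
  {K : ℝ}

lemma memLp_intervalIntegral_of_ae_abs_le {p : ENNReal} (hc : Measurable (Function.uncurry c))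
    (hK : ∀ᵐ y, ∀ᵐ s ∂P, |c y s| ≤ K) (a b : ℝ) :
    MemLp (fun s => ∫ y in a..b, c y s) p P :=
  (memLp_integral_of_ae_abs_le hc (ae_restrict_of_ae hK)).sub
    (memLp_integral_of_ae_abs_le hc (ae_restrict_of_ae hK))

lemma aestronglyMeasurable_sigmaPast_intervalIntegral (hc : Measurable (Function.uncurry c))
    (hK : ∀ᵐ y, ∀ᵐ s ∂P, |c y s| ≤ K) {a b : ℝ} (hab : a ≤ b) :
    AEStronglyMeasurable[sigmaPast c b] (fun s => ∫ y in a..b, c y s) P := by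
  simp_rw [intervalIntegral.integral_of_le hab]
  refine aestronglyMeasurable_integral_of_ae (sigmaPast_le (fun _ => hc.of_uncurry_left) b) hc
    (ae_restrict_of_ae hK) ((ae_restrict_mem measurableSet_Ioc).mono fun y hy => ?_)
  exact (measurable_sigmaPast hy.2).stronglyMeasurable.aestronglyMeasurable

lemma aestronglyMeasurable_sigmaFuture_intervalIntegral (hc : Measurable (Function.uncurry c))
    (hK : ∀ᵐ y, ∀ᵐ s ∂P, |c y s| ≤ K) {a b : ℝ} (hab : a ≤ b) :
    AEStronglyMeasurable[sigmaFuture c a] (fun s => ∫ y in a..b, c y s) P := by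
  simp_rw [intervalIntegral.integral_of_le hab]
  refine aestronglyMeasurable_integral_of_ae (sigmaFuture_le (fun _ => hc.of_uncurry_left) a) hc
    (ae_restrict_of_ae hK) ((ae_restrict_mem measurableSet_Ioc).mono fun y hy => ?_)
  exact (measurable_sigmaFuture hy.1.le).stronglyMeasurable.aestronglyMeasurable

lemma ae_intervalIntegral_sub_eq (hc : Measurable (Function.uncurry c))
    (hK : ∀ᵐ y, ∀ᵐ s ∂P, |c y s| ≤ K) (a x y : ℝ) :
    ∀ᵐ s ∂P, (∫ z in a..y, c z s) - ∫ z in a..x, c z s = ∫ z in x..y, c z s := by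
  filter_upwards [ae_ae_abs_le_swap hc hK] with s hs
  have hint := intervalIntegrable_of_ae_abs_le hc.of_uncurry_right hs
  exact intervalIntegral.integral_interval_sub_left (hint _ _) (hint _ _)

end IntervalIntegral

section SecondMoment

/-- The increments of `x ↦ ∫₀ˣ c` have second moment at most `R` times their length. -/
def HasLinearSecondMoment {S : Type*} [MeasurableSpace S] (P : Measure S) (c : ℝ → S → ℝ)
    (R : ℝ) : Prop :=
  ∀ a b : ℝ, a ≤ b → ∫ s, (∫ y in a..b, c y s) ^ 2 ∂P ≤ R * (b - a)

variable {S : Type*} [MeasurableSpace S] {P : Measure S} {c : ℝ → S → ℝ} {K R : ℝ}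

lemma HasLinearSecondMoment.nonneg (hR : HasLinearSecondMoment P c R) : 0 ≤ R := by
  have hnonneg : 0 ≤ ∫ s, (∫ y in (0 : ℝ)..1, c y s) ^ 2 ∂P :=
    integral_nonneg fun s => sq_nonneg _
  simpa using hnonneg.trans (hR 0 1 zero_le_one)

variable [IsFiniteMeasure P]

lemma abs_integral_mul_intervalIntegral_le (hc : Measurable (Function.uncurry c))
    (hK : ∀ᵐ y, ∀ᵐ s ∂P, |c y s| ≤ K) {Z : S → ℝ} (hZ : Integrable Z P)
    (hint : Integrable fun z => ∫ s, Z s * c z s ∂P)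
    (hR : ∫ z, |∫ s, Z s * c z s ∂P| ≤ R) {a b : ℝ} (hab : a ≤ b) :
    |∫ s, Z s * (∫ z in a..b, c z s) ∂P| ≤ R := by
  simp_rw [intervalIntegral.integral_of_le hab]
  rw [integral_mul_integral_swap hc (ae_restrict_of_ae hK) hZ]
  calc |∫ z in Ioc a b, ∫ s, Z s * c z s ∂P|
      ≤ ∫ z in Ioc a b, |∫ s, Z s * c z s ∂P| := abs_integral_le_integral_abs
    _ ≤ ∫ z, |∫ s, Z s * c z s ∂P| :=
        setIntegral_le_integral hint.abs (.of_forall fun _ => abs_nonneg _)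
    _ ≤ R := hR

theorem hasLinearSecondMoment_of_integral_abs_le (hc : Measurable (Function.uncurry c))
    (hK : ∀ᵐ y, ∀ᵐ s ∂P, |c y s| ≤ K)
    (hint : ∀ᵐ y, Integrable fun z => ∫ s, c y s * c z s ∂P)
    (hR : ∀ᵐ y, ∫ z, |∫ s, c y s * c z s ∂P| ≤ R) : HasLinearSecondMoment P c R := by
  intro a b hab
  have hI : MemLp (fun s => ∫ z in a..b, c z s) 1 P :=
    memLp_intervalIntegral_of_ae_abs_le hc hK a b
  have hcross : ∀ᵐ y, ‖∫ s, (∫ z in a..b, c z s) * c y s ∂P‖ ≤ R := by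
    filter_upwards [hK, hint, hR] with y hyK hyint hyR
    simp_rw [mul_comm (∫ z in a..b, c z _)]
    exact abs_integral_mul_intervalIntegral_le hc hK
      (.of_bound hc.of_uncurry_left.aestronglyMeasurable K hyK) hyint hyR hab
  calc ∫ s, (∫ y in a..b, c y s) ^ 2 ∂P
      = ∫ s, (∫ z in a..b, c z s) * (∫ y in Ioc a b, c y s) ∂P := by
        simp only [sq, intervalIntegral.integral_of_le hab]
    _ = ∫ y in Ioc a b, ∫ s, (∫ z in a..b, c z s) * c y s ∂P :=
        integral_mul_integral_swap hc (ae_restrict_of_ae hK) (memLp_one_iff_integrable.1 hI)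
    _ ≤ R * volume.real (Ioc a b) := (le_abs_self _).trans <|
        norm_setIntegral_le_of_norm_le_const_ae' (by simp) (hcross.mono fun _ hy _ => hy)
    _ = R * (b - a) := by rw [Real.volume_real_Ioc_of_le hab]

end SecondMoment

section MaximalInequality

lemma measureReal_le_abs_le_integral_sq_div {S : Type*} [MeasurableSpace S] {P : Measure S}
    {X : S → ℝ} {l : ℝ} (hX : MemLp X 2 P) (hl : 0 < l) :
    P.real {s | l ≤ |X s|} ≤ (∫ s, X s ^ 2 ∂P) / l ^ 2 := by
  have hset : {s | l ≤ |X s|} = {s | l ^ 2 ≤ X s ^ 2} := by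
    ext s
    simp only [mem_ofPred_eq, sq_le_sq, abs_of_pos hl]
  rw [hset, le_div_iff₀' (by positivity)]
  exact mul_meas_ge_le_integral_of_nonneg (.of_forall fun s => sq_nonneg (X s)) hX.integrable_sq _

variable {S : Type*} [MeasurableSpace S] {P : Measure S} {c : ℝ → S → ℝ} {K R a l m : ℝ}

variable [IsProbabilityMeasure P]

lemma ottaviani_grid {n : ℕ} {p : ℝ} (hc : Measurable (Function.uncurry c))
    (hK : ∀ᵐ y, ∀ᵐ s ∂P, |c y s| ≤ K) (hm : 0 ≤ m) (hl : 0 ≤ l) (hml : K * m ≤ l)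
    (hp : ∀ x y, x ≤ y → y - x ≤ n * m → P.real {s | l ≤ |∫ z in x..y, c z s|} ≤ p) :
    (1 - (p + phiMix P c m)) *
      P.real {s | ∃ k ≤ n, l + l + l ≤ |∫ y in a..a + k * m, c y s|} ≤ p := by
  have hgrid : Monotone fun k : ℕ => a + k * m :=
    monotone_const.add (Nat.mono_cast.mul_const hm)
  have hstep (k : ℕ) : a + (k + 1 : ℕ) * m = a + k * m + m := by push_cast; ring
  have hdiff (j k : ℕ) := ae_intervalIntegral_sub_eq hc hK a (a + j * m) (a + k * m)
  have ha (k : ℕ) : a ≤ a + k * m := le_add_of_nonneg_right (by positivity)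
  have hp0 : 0 ≤ p := measureReal_nonneg.trans (hp a a le_rfl (by rw [sub_self]; positivity))
  refine (ottaviani_of_phiMix (X := fun k s => ∫ y in a..a + k * m, c y s)
    (fun _ => hc.of_uncurry_left) hgrid hl hl hp0
    (fun k => aestronglyMeasurable_sigmaPast_intervalIntegral hc hK (ha k))
    (fun k hk => ?_) (fun k _ => ?_) (fun k hk => ?_)).trans (hp _ _ (ha n) (by simp))
  · rw [← hstep]
    exact (aestronglyMeasurable_sigmaFuture_intervalIntegral hc hK (hgrid hk)).congr
      ((hdiff _ _).mono fun s hs => hs.symm)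
  · filter_upwards [hdiff k (k + 1), ae_ae_abs_le_swap hc hK] with s hs hsK
    rw [hs, hstep]
    refine (abs_intervalIntegral_le_of_ae_abs_le hsK _ _).trans ?_
    rwa [add_sub_cancel_left, abs_of_nonneg hm]
  · rw [measureReal_congr (t := {s | l ≤ |∫ y in a + (k + 1 : ℕ) * m..a + n * m, c y s|})
      (eventuallyEq_set.2 <| (hdiff (k + 1) n).mono fun s hs => by
        simp only [mem_ofPred_eq, hs, Real.norm_eq_abs])]
    have : 0 ≤ ((k + 1 : ℕ) : ℝ) * m := by positivity
    exact hp _ _ (hgrid hk) (by linarith)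

lemma maximal_ineq_grid {n : ℕ} (hc : Measurable (Function.uncurry c))
    (hK : ∀ᵐ y, ∀ᵐ s ∂P, |c y s| ≤ K) (hR : HasLinearSecondMoment P c R)
    (hm : 0 ≤ m) (hl : 0 < l) (hml : K * m ≤ l) :
    (1 - phiMix P c m) * P.real {s | ∃ k ≤ n, 3 * l ≤ |∫ y in a..a + k * m, c y s|} ≤
      2 * (R * (n * m) / l ^ 2) := by
  have hR0 : 0 ≤ R := hR.nonneg
  set q := P.real {s | ∃ k ≤ n, 3 * l ≤ |∫ y in a..a + k * m, c y s|} with hq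
  have hgrid : (1 - (R * (n * m) / l ^ 2 + phiMix P c m)) * q ≤ R * (n * m) / l ^ 2 := by
    have hl3 : 3 * l = l + l + l := by ring
    rw [hq, hl3]
    refine ottaviani_grid hc hK hm hl.le hml fun x y hxy hyx => ?_
    calc P.real {s | l ≤ |∫ z in x..y, c z s|}
        ≤ (∫ s, (∫ z in x..y, c z s) ^ 2 ∂P) / l ^ 2 :=
          measureReal_le_abs_le_integral_sq_div (memLp_intervalIntegral_of_ae_abs_le hc hK x y) hl
      _ ≤ R * (n * m) / l ^ 2 := by
          gcongr
          exact (hR x y hxy).trans (by gcongr)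
  have hq1 : R * (n * m) / l ^ 2 * q ≤ R * (n * m) / l ^ 2 :=
    mul_le_of_le_one_right (by positivity) measureReal_le_one
  linarith

theorem maximal_ineq_Icc (hc : Measurable (Function.uncurry c))
    (hK : ∀ᵐ y, ∀ᵐ s ∂P, |c y s| ≤ K) (hR : HasLinearSecondMoment P c R) (hm : 0 < m)
    (hφ : phiMix P c m < 1) {L : ℝ} (hL : 0 ≤ L) (hl : 0 < l) :
    P.real {s | ∃ x ∈ Icc a (a + L), 4 * l ≤ |∫ y in a..x, c y s|} ≤
      ((K * m) ^ 2 + 2 * R * (L + m) / (1 - phiMix P c m)) / l ^ 2 := by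
  have hR0 : 0 ≤ R := hR.nonneg
  have hφ' : 0 < 1 - phiMix P c m := sub_pos.2 hφ
  rcases lt_or_ge l (K * m) with hlm | hlm
  · refine measureReal_le_one.trans ((one_le_div (by positivity)).2 ?_)
    have hsq : l ^ 2 ≤ (K * m) ^ 2 := by gcongr
    exact hsq.trans (le_add_of_nonneg_right (by positivity))
  set n := ⌈L / m⌉₊
  have hLn : L ≤ n * m := (div_le_iff₀ hm).1 (Nat.le_ceil _)
  have hnL : n * m ≤ L + m := by
    have := mul_lt_mul_of_pos_right (Nat.ceil_lt_add_one (div_nonneg hL hm.le)) hm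
    rw [add_mul, div_mul_cancel₀ _ hm.ne', one_mul] at this
    exact this.le
  calc P.real {s | ∃ x ∈ Icc a (a + L), 4 * l ≤ |∫ y in a..x, c y s|}
      ≤ P.real {s | ∃ k ≤ n, 3 * l ≤ |∫ y in a..a + k * m, c y s|} := by
        refine ENNReal.toReal_mono (measure_ne_top _ _) (measure_mono_ae ?_)
        filter_upwards [ae_ae_abs_le_swap hc hK] with s hs ⟨x, hx, hlx⟩
        exact exists_grid_le_abs_intervalIntegral hc.of_uncurry_right hs hm hlm
          ⟨hx.1, hx.2.trans (by gcongr)⟩ (by linarith)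
    _ ≤ 2 * (R * (n * m) / l ^ 2) / (1 - phiMix P c m) :=
        (le_div_iff₀' hφ').2 (maximal_ineq_grid hc hK hR hm.le hl hlm)
    _ ≤ 2 * (R * (L + m) / l ^ 2) / (1 - phiMix P c m) := by gcongr
    _ = 2 * R * (L + m) / (1 - phiMix P c m) / l ^ 2 := by ring
    _ ≤ _ := by
        gcongr
        exact le_add_of_nonneg_left (sq_nonneg _)

theorem maximal_ineq_abs_le (hc : Measurable (Function.uncurry c))
    (hK : ∀ᵐ y, ∀ᵐ s ∂P, |c y s| ≤ K) (hR : HasLinearSecondMoment P c R) (hm : 0 < m)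
    (hφ : phiMix P c m < 1) {L : ℝ} (hL : 0 ≤ L) (hl : 0 < l) :
    P.real {s | ∃ x, |x| ≤ L ∧ 8 * l ≤ |∫ y in 0..x, c y s|} ≤
      ((K * m) ^ 2 + 2 * R * (2 * L + m) / (1 - phiMix P c m)) / l ^ 2 := by
  refine le_trans ?_ (maximal_ineq_Icc (a := -L) hc hK hR hm hφ (by positivity) hl)
  refine ENNReal.toReal_mono (measure_ne_top _ _) (measure_mono_ae ?_)
  filter_upwards [ae_ae_abs_le_swap hc hK] with s hs ⟨x, hxL, hlx⟩
  have hint := intervalIntegrable_of_ae_abs_le hc.of_uncurry_right hs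
  have hsub := intervalIntegral.integral_interval_sub_left (hint (-L) x) (hint (-L) 0)
  rw [← hsub] at hlx
  have htri := abs_sub (∫ y in -L..x, c y s) (∫ y in -L..0, c y s)
  obtain ⟨hLx, hxL⟩ := abs_le.1 hxL
  rcases le_total (4 * l) |∫ y in -L..x, c y s| with h | h
  · exact ⟨x, ⟨hLx, by linarith⟩, h⟩
  · exact ⟨0, ⟨by linarith, by linarith⟩, by linarith⟩

end MaximalInequality

namespace FieldHyps

variable {S : Type*} [MeasurableSpace S] {P : Measure S} {c : ℝ → S → ℝ} {cbar : ℝ}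

lemma identDistrib (hc : FieldHyps P c cbar) (h : ℝ) {n : ℕ} (x : Fin n → ℝ) :
    IdentDistrib (fun σ i => c (x i) σ) (fun σ i => c (x i + h) σ) P P where
  aemeasurable_fst := (measurable_pi_lambda _ fun _ => hc.meas.of_uncurry_left).aemeasurable
  aemeasurable_snd := (measurable_pi_lambda _ fun _ => hc.meas.of_uncurry_left).aemeasurable
  map_eq := (hc.stat h n x).symm

lemma exists_ae_abs_le (hc : FieldHyps P c cbar) : ∃ K : ℝ, ∀ y, ∀ᵐ s ∂P, |c y s| ≤ K := by
  obtain ⟨K, hK⟩ := hc.bdd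
  refine ⟨K, fun y => ?_⟩
  have hid := (hc.identDistrib y ![0]).comp (measurable_pi_apply 0)
  have hy := hid.ae_snd (p := fun v => |v| ≤ K) (measurableSet_le (by fun_prop) (by fun_prop))
    (by simpa using hK)
  simpa using hy

lemma integral_mul_eq (hc : FieldHyps P c cbar) (y z : ℝ) :
    ∫ s, c y s * c z s ∂P = ∫ s, c 0 s * c (z - y) s ∂P := by
  have hmul : Measurable fun v : Fin 2 → ℝ => v 0 * v 1 := by fun_prop
  simpa using ((hc.identDistrib y ![0, z - y]).comp hmul).integral_eq.symm

lemma hasLinearSecondMoment [IsFiniteMeasure P] (hc : FieldHyps P c cbar) :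
    HasLinearSecondMoment P c (∫ x, |∫ s, c 0 s * c x s ∂P|) := by
  obtain ⟨K, hK⟩ := hc.exists_ae_abs_le
  refine hasLinearSecondMoment_of_integral_abs_le hc.meas (.of_forall hK)
    (.of_forall fun y => ?_) (.of_forall fun y => ?_) <;> simp only [hc.integral_mul_eq y]
  · exact hc.covInt.comp_sub_right y
  · exact (integral_sub_right_eq_self (fun x => |∫ s, c 0 s * c x s ∂P|) y).le

lemma exists_phiMix_lt_one (hc : FieldHyps P c cbar) : ∃ m : ℝ, 0 < m ∧ phiMix P c m < 1 := by
  by_contra! hφ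
  have hone : IntegrableOn (fun _ : ℝ => (1 : ℝ)) (Ioi 0) := by
    refine hc.mix.mono' aestronglyMeasurable_const ?_
    filter_upwards [ae_restrict_mem measurableSet_Ioi] with m hm
    simpa using hφ m hm
  simp [integrableOn_const_iff] at hone

end FieldHyps

section RescaledField

variable {S : Type*} {c : ℝ → S → ℝ} {cbar ε : ℝ}

lemma Weps_eq (hε : 0 < ε) (x : ℝ) (s : S) :
    Weps c cbar ε x s = √ε / cbar * ∫ y in 0..x / ε, c y s := by
  rw [Weps, intervalIntegral.integral_comp_div (fun y => c y s) hε.ne', zero_div, smul_eq_mul,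
    ← mul_assoc]
  congr 1
  field_simp
  rw [Real.sq_sqrt hε.le]

variable [MeasurableSpace S] {P : Measure S} [IsProbabilityMeasure P] {K R m : ℝ}

lemma measureReal_exists_le_abs_Weps_le (hc : Measurable (Function.uncurry c))
    (hK : ∀ᵐ y, ∀ᵐ s ∂P, |c y s| ≤ K) (hR : HasLinearSecondMoment P c R) (hm : 0 < m)
    (hφ : phiMix P c m < 1) (hcbar : cbar ≠ 0) (hε : 0 < ε) {T l : ℝ} (hT : 0 ≤ T) (hl : 0 < l) :
    P.real {s | ∃ x, |x| ≤ T ∧ l ≤ |Weps c cbar ε x s|} ≤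
      64 * (ε * (K * m) ^ 2 + 2 * R * (2 * T + ε * m) / (1 - phiMix P c m)) / cbar ^ 2 /
        l ^ 2 := by
  have hsqrt : 0 < √ε := Real.sqrt_pos.2 hε
  have hset : {s | ∃ x, |x| ≤ T ∧ l ≤ |Weps c cbar ε x s|} ⊆
      {s | ∃ x, |x| ≤ T / ε ∧ 8 * (l * |cbar| / √ε / 8) ≤ |∫ y in 0..x, c y s|} := by
    rintro s ⟨x, hx, hlx⟩
    refine ⟨x / ε, by rw [abs_div, abs_of_pos hε]; gcongr, ?_⟩
    rw [Weps_eq hε, abs_mul, abs_div, abs_of_pos hsqrt] at hlx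
    rw [mul_div_cancel₀ _ (by norm_num), div_le_iff₀ hsqrt]
    have := mul_le_mul_of_nonneg_right hlx (abs_nonneg cbar)
    field_simp at this
    linarith
  refine (measureReal_mono hset).trans
    ((maximal_ineq_abs_le hc hK hR hm hφ (by positivity) (by positivity)).trans_eq ?_)
  have hφ' : 1 - phiMix P c m ≠ 0 := (sub_pos.2 hφ).ne'
  simp only [div_pow, mul_pow, sq_abs, Real.sq_sqrt hε.le]
  field_simp
  ring

lemma measureReal_exists_le_abs_Weps_le_mul (hc : Measurable (Function.uncurry c))
    (hK : ∀ᵐ y, ∀ᵐ s ∂P, |c y s| ≤ K) (hR : HasLinearSecondMoment P c R) (hm : 0 < m)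
    (hφ : phiMix P c m < 1) (hcbar : cbar ≠ 0) {ε₀ T l : ℝ} (hε : ε ∈ Ioc 0 ε₀) (hT : 1 ≤ T)
    (hl : 0 < l) :
    P.real {s | ∃ x, |x| ≤ T ∧ l ≤ |Weps c cbar ε x s|} ≤
      64 * (ε₀ * (K * m) ^ 2 + 2 * R * (2 + ε₀ * m) / (1 - phiMix P c m)) / cbar ^ 2 * T /
        l ^ 2 := by
  have hR0 := hR.nonneg
  have hεT : ε ≤ ε₀ * T := hε.2.trans (le_mul_of_one_le_right (hε.1.le.trans hε.2) hT)
  calc P.real {s | ∃ x, |x| ≤ T ∧ l ≤ |Weps c cbar ε x s|}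
      ≤ 64 * (ε * (K * m) ^ 2 + 2 * R * (2 * T + ε * m) / (1 - phiMix P c m)) / cbar ^ 2 /
          l ^ 2 :=
        measureReal_exists_le_abs_Weps_le hc hK hR hm hφ hcbar hε.1 (by positivity) hl
    _ ≤ 64 * (ε₀ * T * (K * m) ^ 2 + 2 * R * (2 * T + ε₀ * T * m) / (1 - phiMix P c m)) /
          cbar ^ 2 / l ^ 2 := by gcongr
    _ = _ := by ring

lemma exists_measure_le_iSup_Weps_le {γ : ℝ} (hc : Measurable (Function.uncurry c))
    (hK : ∀ᵐ y, ∀ᵐ s ∂P, |c y s| ≤ K) (hR : HasLinearSecondMoment P c R) (hm : 0 < m)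
    (hφ : phiMix P c m < 1) (hcbar : cbar ≠ 0) (hγ : γ < 1 / 2) {ε₀ : ℝ} (hε₀ : 0 < ε₀) :
    ∃ C' : ℝ, ∀ M : ℝ, 0 < M → ∀ ε ∈ Ioc 0 ε₀,
      P {σ | ENNReal.ofReal M ≤
          ⨆ x : ℝ, ENNReal.ofReal (|Weps c cbar ε x σ| / (1 + |x|) ^ (1 - γ))} ≤
        ENNReal.ofReal (C' / M ^ 2) := by
  have hR0 := hR.nonneg
  set D := 64 * (ε₀ * (K * m) ^ 2 + 2 * R * (2 + ε₀ * m) / (1 - phiMix P c m)) / cbar ^ 2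
  have hD : 0 ≤ D := by positivity
  refine ⟨D * 2 ^ ((1 : ℝ) + 2) / (1 - 2 ^ (1 - (1 - γ) * 2)), fun M hM ε hε => ?_⟩
  have hpeel := measure_le_iSup_norm_div_rpow_le (P := P) (W := Weps c cbar ε) (α := 1)
    (β := 1 - γ) (p := 2) hD (by linarith) (by linarith) (fun T l hT hl => ?_) hM
  · simpa only [Real.norm_eq_abs, Real.rpow_two] using hpeel
  · rw [Real.rpow_one, Real.rpow_two, ← ofReal_measureReal]
    exact ENNReal.ofReal_le_ofReal
      (measureReal_exists_le_abs_Weps_le_mul hc hK hR hm hφ hcbar hε hT hl)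

lemma exists_pos_div_sq_le (C : ℝ) {δ : ℝ} (hδ : 0 < δ) : ∃ M : ℝ, 0 < M ∧ C / M ^ 2 ≤ δ := by
  have hlim : Tendsto (fun M : ℝ => C / M ^ 2) atTop (nhds 0) :=
    tendsto_const_nhds.div_atTop (tendsto_pow_atTop two_ne_zero)
  exact ((eventually_gt_atTop 0).and (hlim.eventually_le_const hδ)).exists

theorem stmt9_general {γ : ℝ} (hc : Measurable (Function.uncurry c))
    (hK : ∀ᵐ y, ∀ᵐ s ∂P, |c y s| ≤ K) (hR : HasLinearSecondMoment P c R) (hm : 0 < m)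
    (hφ : phiMix P c m < 1) (hcbar : cbar ≠ 0) (hγ : γ < 1 / 2) {ε₀ : ℝ} (hε₀ : 0 < ε₀) :
    (∀ δ : ℝ, 0 < δ → ∃ M : ℝ, 0 < M ∧ ∀ ε ∈ Ioc (0 : ℝ) ε₀,
      P {σ | ENNReal.ofReal M ≤
          ⨆ x : ℝ, ENNReal.ofReal (|Weps c cbar ε x σ| / (1 + |x|) ^ (1 - γ))} ≤
        ENNReal.ofReal δ) ∧
    ∃ C' : ℝ, ∀ M : ℝ, 0 < M → ∀ ε ∈ Ioc (0 : ℝ) ε₀,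
      P {σ | ENNReal.ofReal M ≤
          ⨆ x : ℝ, ENNReal.ofReal (|Weps c cbar ε x σ| / (1 + |x|) ^ (1 - γ))} ≤
        ENNReal.ofReal (C' / M ^ 2) := by
  obtain ⟨C', hC'⟩ := exists_measure_le_iSup_Weps_le hc hK hR hm hφ hcbar hγ hε₀
  refine ⟨fun δ hδ => ?_, C', hC'⟩
  obtain ⟨M, hM, hMδ⟩ := exists_pos_div_sq_le C' hδ
  exact ⟨M, hM, fun ε hε => (hC' M hM ε hε).trans (ENNReal.ofReal_le_ofReal hMδ)⟩

end RescaledField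

/-- Lemma 4.1: tightness of `ξ_{γ,ε}`.
Under the standing assumptions on the field `c`, for every `γ ∈ (0,1/2)` and `ε₀ > 0` the
family `ξ_{γ,ε} = sup_{x∈ℝ} |W_ε(x)|/(1+|x|)^{1−γ}`, `0 < ε ≤ ε₀`, is tight; indeed there
is a constant `C′` with `P(ξ_{γ,ε} ≥ M) ≤ C′/M²` for all `M > 0` and all `ε ∈ (0,ε₀]`. -/
theorem stmt9 {S : Type*} [MeasurableSpace S] (P : Measure S) [IsProbabilityMeasure P]
    (c : ℝ → S → ℝ) (cbar : ℝ) (hc : FieldHyps P c cbar)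
    (γ : ℝ) (hγ : γ ∈ Set.Ioo (0:ℝ) (1/2)) (ε₀ : ℝ) (hε₀ : 0 < ε₀) :
    (∀ δ : ℝ, 0 < δ → ∃ M : ℝ, 0 < M ∧ ∀ ε ∈ Set.Ioc (0:ℝ) ε₀,
      P {σ | ENNReal.ofReal M ≤
          ⨆ x : ℝ, ENNReal.ofReal (|Weps c cbar ε x σ| / (1 + |x|) ^ (1 - γ))} ≤
        ENNReal.ofReal δ) ∧
    ∃ C' : ℝ, ∀ M : ℝ, 0 < M → ∀ ε ∈ Set.Ioc (0:ℝ) ε₀,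
      P {σ | ENNReal.ofReal M ≤
          ⨆ x : ℝ, ENNReal.ofReal (|Weps c cbar ε x σ| / (1 + |x|) ^ (1 - γ))} ≤
        ENNReal.ofReal (C' / M ^ 2) := by
  obtain ⟨⟨K, hK⟩, m, hm, hφ⟩ := And.intro hc.exists_ae_abs_le hc.exists_phiMix_lt_one
  exact stmt9_general hc.meas (.of_forall hK) hc.hasLinearSecondMoment hm hφ hc.cbar_pos.ne' hγ.2
    hε₀
end
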